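/- Assume 0 ≤ α < N, p, q > 0, ρ > 0, and that the Dirichlet eigenpair hypothesis holds for (Ω, λ₁, φ). If μ ≤ C_{H,Ω} and (p + q − 1)·|γ_*| < N − α + 2 (equivalently, p + q < 1 + (N−α+2)/|γ_*| when γ_* < 0), then the inequality (E): −Δu − μ|x|^{−2}u ≥ (|x|^{−α} * u^p) u^q has no positive solution in C_Ω^ρ. -/

import Mathlib

open MeasureTheory Real Set
open scoped ENNReal NNReal

noncomputable section

/-- Euclidean space `ℝ^N`. -/
abbrev Euc (N : ℕ) := EuclideanSpace ℝ (Fin N)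

/-- The Euclidean Laplacian `Δu(x) = ∑ ∂²u/∂xᵢ²(x)`, the trace of the Hessian. -/
def lap (N : ℕ) (u : Euc N → ℝ) (x : Euc N) : ℝ :=
  ∑ i : Fin N,
    iteratedFDeriv ℝ 2 u x ![EuclideanSpace.single i 1, EuclideanSpace.single i 1]

/-- The open cone `C_Ω^ρ = {x : |x| > ρ, x/|x| ∈ Ω}`. -/
def coneGT (N : ℕ) (ρ : ℝ) (Ω : Set (Euc N)) : Set (Euc N) :=
  {x | ρ < ‖x‖ ∧ ‖x‖⁻¹ • x ∈ Ω}

/-- The full open cone `C_Ω = {x ≠ 0 : x/|x| ∈ Ω}`. -/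
def cone (N : ℕ) (Ω : Set (Euc N)) : Set (Euc N) :=
  {x | x ≠ 0 ∧ ‖x‖⁻¹ • x ∈ Ω}

/-- `Ω` is a nonempty, connected, relatively open subset of the unit sphere `S^{N-1}`. -/
def IsConeDomain (N : ℕ) (Ω : Set (Euc N)) : Prop :=
  Ω ⊆ Metric.sphere (0 : Euc N) 1 ∧ IsConnected Ω ∧
    IsOpen {ω : Metric.sphere (0 : Euc N) 1 | (ω : Euc N) ∈ Ω}

/-- The convolution `(|x|^{-α} * f)(x) = ∫_{C_Ω^ρ} f(y)|x-y|^{-α} dy`, valued in `[0,∞]`. -/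
def rieszConv (N : ℕ) (α ρ : ℝ) (Ω : Set (Euc N)) (f : Euc N → ℝ) (x : Euc N) : ℝ≥0∞ :=
  ∫⁻ y in coneGT N ρ Ω, ENNReal.ofReal (f y * ‖x - y‖ ^ (-α))

/-- Dirichlet eigenpair hypothesis for `(Ω, λ₁, φ)`: `φ` is continuous on the closure of `Ω`,
positive on `Ω`, vanishing on the relative boundary, with maximum `1`, and its 0-homogeneous
extension `Φ(x) = φ(x/|x|)` is `C²` on the open cone and satisfies `ΔΦ = -λ₁|x|⁻²Φ`. -/
structure DirichletEigenpair (N : ℕ) (Ω : Set (Euc N)) (lam1 : ℝ) (φ : Euc N → ℝ) : Prop where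
  contOn : ContinuousOn φ (closure Ω)
  pos : ∀ ω ∈ Ω, 0 < φ ω
  bdryZero : ∀ ω ∈ closure Ω \ Ω, φ ω = 0
  le_one : ∀ ω ∈ closure Ω, φ ω ≤ 1
  max_one : ∃ ω ∈ closure Ω, φ ω = 1
  smoothExt : ContDiffOn ℝ 2 (fun x => φ (‖x‖⁻¹ • x)) (cone N Ω)
  eigen : ∀ x ∈ cone N Ω,
    lap N (fun y => φ (‖y‖⁻¹ • y)) x = -lam1 * ‖x‖ ^ (-(2:ℝ)) * φ (‖x‖⁻¹ • x)

/-- The Hardy constant `C_{H,Ω} = λ₁ + ((N-2)/2)²`. -/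
def CHconst (N : ℕ) (lam1 : ℝ) : ℝ := lam1 + (((N : ℝ) - 2) / 2) ^ 2

/-- The smaller root `γ_*` of `γ(γ + N - 2) = λ₁ - μ`. -/
def gammaStar (N : ℕ) (lam1 μ : ℝ) : ℝ :=
  (-((N : ℝ) - 2) - Real.sqrt (((N : ℝ) - 2) ^ 2 + 4 * (lam1 - μ))) / 2

/-- A positive (classical) solution of `(E) : -Δu - μ|x|⁻²u ≥ (|x|^{-α} * uᵖ) u^q` in `C_Ω^ρ`. -/
def IsPosSolE (N : ℕ) (ρ μ α p q : ℝ) (Ω : Set (Euc N)) (u : Euc N → ℝ) : Prop :=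
  ContDiffOn ℝ 2 u (coneGT N ρ Ω) ∧
  ContinuousOn u (closure (coneGT N ρ Ω)) ∧
  (∀ x ∈ coneGT N ρ Ω, 0 < u x) ∧
  (∀ x ∈ coneGT N ρ Ω, rieszConv N α ρ Ω (fun y => u y ^ p) x < ⊤) ∧
  (∀ x ∈ coneGT N ρ Ω,
    (rieszConv N α ρ Ω (fun y => u y ^ p) x).toReal * u x ^ q ≤
      -lap N u x - μ * ‖x‖ ^ (-(2:ℝ)) * u x)

/-- A positive solution of `(Z) : -Δu - μ|x|⁻²u ≥ (∫_{C_Ω^ρ} uᵖ) u^q` in `C_Ω^ρ`. -/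
def IsPosSolZ (N : ℕ) (ρ μ p q : ℝ) (Ω : Set (Euc N)) (u : Euc N → ℝ) : Prop :=
  ContDiffOn ℝ 2 u (coneGT N ρ Ω) ∧
  ContinuousOn u (closure (coneGT N ρ Ω)) ∧
  (∀ x ∈ coneGT N ρ Ω, 0 < u x) ∧
  (∫⁻ y in coneGT N ρ Ω, ENNReal.ofReal (u y ^ p)) < ⊤ ∧
  (∀ x ∈ coneGT N ρ Ω,
    (∫⁻ y in coneGT N ρ Ω, ENNReal.ofReal (u y ^ p)).toReal * u x ^ q ≤
      -lap N u x - μ * ‖x‖ ^ (-(2:ℝ)) * u x)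

/-- A positive solution `(u, v)` of the system `(S)` in `C_Ω^ρ`. -/
def IsPosSolS (N : ℕ) (ρ μ α p q s : ℝ) (Ω : Set (Euc N)) (u v : Euc N → ℝ) : Prop :=
  ContDiffOn ℝ 2 u (coneGT N ρ Ω) ∧ ContinuousOn u (closure (coneGT N ρ Ω)) ∧
  ContDiffOn ℝ 2 v (coneGT N ρ Ω) ∧ ContinuousOn v (closure (coneGT N ρ Ω)) ∧
  (∀ x ∈ coneGT N ρ Ω, 0 < u x) ∧ (∀ x ∈ coneGT N ρ Ω, 0 < v x) ∧
  (∀ x ∈ coneGT N ρ Ω, rieszConv N α ρ Ω (fun y => v y ^ p) x < ⊤) ∧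
  (∀ x ∈ coneGT N ρ Ω,
    (rieszConv N α ρ Ω (fun y => v y ^ p) x).toReal * v x ^ q ≤
      -lap N u x - μ * ‖x‖ ^ (-(2:ℝ)) * u x) ∧
  (∀ x ∈ coneGT N ρ Ω, u x ^ s ≤ -lap N v x - μ * ‖x‖ ^ (-(2:ℝ)) * v x)

/-!
Let `ν` be a probability measure with density a compactly supported cutoff of `φ(x/|x|)²`, and put
`y(t) = ∫ log u(eᵗx) dν(x)`. Barta's inequality `∫ (-Δ_S u / u) dν ≤ λ₁ + κ`, with `κ > 0` as small
as desired, survives the cutoff, and Jensen's inequality, applied to the convolution and to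
`u^(q-1)`, turns `(E)` into the Riccati inequality
`y'' + 2ky' + y'² ≤ λ₁ + κ - μ - C exp(βt + θy)`, where `k = (N-2)/2`, `β = N-α+2`, `θ = p+q-1`.
The terms other than the exponential force `y' ≥ -(k+σ)` eventually, with `k+σ` slightly above
`|γ_*|`; as `θ|γ_*| < β`, the exponent `βt + θy` tends to infinity (when `θ < 0`, because
finiteness of the convolution bounds `y` above). Then `v = exp(y + kt)` is positive and eventually
`v'' ≤ -v`, which is impossible on a half-line.
-/

open InnerProductSpace Gradient Laplacian Filter Topology
open Function (support)

/-! ### Divergence of vector fields -/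

section Divergence

theorem contDiff_of_contDiffOn_of_tsupport_subset {F G : Type*} [NormedAddCommGroup F]
    [NormedSpace ℝ F] [NormedAddCommGroup G] [NormedSpace ℝ G] {n : WithTop ℕ∞} {U : Set F}
    {f : F → G} (hU : IsOpen U) (hf : ContDiffOn ℝ n f U) (hsupp : tsupport f ⊆ U) :
    ContDiff ℝ n f := by
  refine contDiff_iff_contDiffAt.2 fun x => ?_
  by_cases hx : x ∈ tsupport f
  · exact hf.contDiffAt (hU.mem_nhds (hsupp hx))
  · exact contDiffAt_const.congr_of_eventuallyEq (notMem_tsupport_iff_eventuallyEq.1 hx)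

theorem integrable_of_continuousOn_of_tsupport_subset {F G : Type*} [NormedAddCommGroup F]
    [NormedSpace ℝ F] [MeasurableSpace F] [BorelSpace F] [NormedAddCommGroup G] [NormedSpace ℝ G]
    {μ : Measure F} [IsFiniteMeasureOnCompacts μ] {U : Set F} {f : F → G} (hU : IsOpen U)
    (hf : ContinuousOn f U) (hcomp : HasCompactSupport f) (hsupp : tsupport f ⊆ U) :
    Integrable f μ :=
  (contDiff_of_contDiffOn_of_tsupport_subset hU (contDiffOn_zero.2 hf)
    hsupp).continuous.integrable_of_hasCompactSupport hcomp

variable {E : Type*} [NormedAddCommGroup E] [InnerProductSpace ℝ E]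

/-- The divergence of a vector field, as the trace of its derivative. -/
def divergence (V : E → E) (x : E) : ℝ :=
  LinearMap.trace ℝ E (fderiv ℝ V x)

theorem divergence_congr {V W : E → E} {x : E} (h : V =ᶠ[𝓝 x] W) :
    divergence V x = divergence W x := by
  rw [divergence, h.fderiv_eq, divergence]

theorem divergence_sub {V W : E → E} {x : E} (hV : DifferentiableAt ℝ V x)
    (hW : DifferentiableAt ℝ W x) :
    divergence (fun y => V y - W y) x = divergence V x - divergence W x := by
  simp [divergence, fderiv_fun_sub hV hW]

theorem divergence_comp_smul (c : ℝ) (V : E → E) (x : E) :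
    divergence (fun y => V (c • y)) x = c * divergence V (c • x) := by
  simp [divergence, fderiv_comp_smul]

theorem divergence_const_smul (c : ℝ) (V : E → E) (x : E) :
    divergence (fun y => c • V y) x = c * divergence V x := by
  simp [divergence, ← Pi.smul_def, fderiv_const_smul_field]

theorem divergence_eq_sum_fderiv_inner {ι : Type*} [Fintype ι] (b : OrthonormalBasis ι ℝ E)
    {V : E → E} {x : E} (hV : DifferentiableAt ℝ V x) :
    divergence V x = ∑ i, fderiv ℝ (fun y => inner ℝ (b i) (V y)) x (b i) := by
  rw [divergence, LinearMap.trace_eq_sum_inner _ b]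
  refine Finset.sum_congr rfl fun i _ => ?_
  simp [fderiv_inner_apply ℝ (differentiableAt_const _) hV]

variable [FiniteDimensional ℝ E]

theorem divergence_id (x : E) : divergence (fun y => y) x = Module.finrank ℝ E := by
  simp [divergence]

theorem divergence_smul {a : E → ℝ} {V : E → E} {x : E} (ha : DifferentiableAt ℝ a x)
    (hV : DifferentiableAt ℝ V x) :
    divergence (fun y => a y • V y) x = fderiv ℝ a x (V x) + a x * divergence V x := by
  simp [divergence, fderiv_fun_smul ha hV, add_comm]

theorem continuousOn_divergence {U : Set E} (hU : IsOpen U) {V : E → E}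
    (hV : ContDiffOn ℝ 1 V U) : ContinuousOn (divergence V) U := by
  let tr : (E →L[ℝ] E) →ₗ[ℝ] ℝ := LinearMap.trace ℝ E ∘ₗ ContinuousLinearMap.coeLM ℝ
  exact tr.continuous_of_finiteDimensional.comp_continuousOn
    (hV.continuousOn_fderiv_of_isOpen hU le_rfl)

theorem contDiffOn_gradient {n m : WithTop ℕ∞} {U : Set E} (hU : IsOpen U) {u : E → ℝ}
    (hu : ContDiffOn ℝ n u U) (hmn : m + 1 ≤ n) : ContDiffOn ℝ m (∇ u) U :=
  (((toDual ℝ E).symm.toContinuousLinearEquiv : StrongDual ℝ E ≃L[ℝ] E).contDiff.comp_contDiffOn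
    (hu.fderiv_of_isOpen hU hmn) :)

theorem divergence_gradient {U : Set E} (hU : IsOpen U) {u : E → ℝ} (hu : ContDiffOn ℝ 2 u U)
    {x : E} (hx : x ∈ U) : divergence (∇ u) x = Δ u x := by
  have hgrad : DifferentiableAt ℝ (∇ u) x :=
    ((contDiffOn_gradient hU hu (m := 1) (by norm_num)).differentiableOn
      one_ne_zero).differentiableAt (hU.mem_nhds hx)
  have hfderiv : DifferentiableAt ℝ (fderiv ℝ u) x :=
    ((hu.fderiv_of_isOpen hU (m := 1) (by norm_num)).differentiableOn
      one_ne_zero).differentiableAt (hU.mem_nhds hx)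
  rw [divergence_eq_sum_fderiv_inner (stdOrthonormalBasis ℝ E) hgrad,
    laplacian_eq_iteratedFDeriv_stdOrthonormalBasis]
  refine Finset.sum_congr rfl fun i _ => ?_
  simp [inner_gradient_right, iteratedFDeriv_two_apply, fderiv_clm_apply hfderiv
    (differentiableAt_const _)]

variable [MeasurableSpace E] [BorelSpace E]

theorem integrable_divergence {V : E → E} (hV : ContDiff ℝ 1 V) (hsupp : HasCompactSupport V) :
    Integrable (divergence V) := by
  have hcont : Continuous (divergence V) :=
    continuousOn_univ.1 (continuousOn_divergence isOpen_univ hV.contDiffOn)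
  exact hcont.integrable_of_hasCompactSupport
    ((hsupp.fderiv ℝ).mono fun x hx hfx => hx (by simp [divergence, hfx]))

theorem integral_divergence_eq_zero {V : E → E} (hV : ContDiff ℝ 1 V)
    (hsupp : HasCompactSupport V) : ∫ x, divergence V x = 0 := by
  have hdiff : Differentiable ℝ V := hV.differentiable one_ne_zero
  set b := stdOrthonormalBasis ℝ E
  have hcoord : ∀ i, ContDiff ℝ 1 fun y => inner ℝ (b i) (V y) := fun i =>
    contDiff_const.inner ℝ hV
  have hcoord_supp : ∀ i, HasCompactSupport fun y => inner ℝ (b i) (V y) := fun i =>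
    hsupp.comp_left (g := fun v => inner ℝ (b i) v) (inner_zero_right _)
  have hint : ∀ i, Integrable fun x => fderiv ℝ (fun y => inner ℝ (b i) (V y)) x (b i) := fun i =>
    (((hcoord i).continuous_fderiv one_ne_zero).clm_apply
      continuous_const).integrable_of_hasCompactSupport ((hcoord_supp i).fderiv_apply ℝ (b i))
  simp_rw [fun x => divergence_eq_sum_fderiv_inner b (hdiff x)]
  rw [integral_finsetSum _ fun i _ => hint i]
  refine Finset.sum_eq_zero fun i _ => ?_
  have hparts := integral_mul_fderiv_eq_neg_fderiv_mul_of_integrable (μ := volume)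
    (f := fun _ => (1 : ℝ)) (v := b i) (by simp) (by simpa using hint i)
    (by simpa using (hcoord i).continuous.integrable_of_hasCompactSupport (hcoord_supp i))
    (by simp) fun x _ => ((hcoord i).differentiable one_ne_zero) x
  simpa using hparts

end Divergence

/-! ### The spherical part of the Laplacian -/

section Spherical

variable {E : Type*} [NormedAddCommGroup E] [InnerProductSpace ℝ E]

/-- The Euler operator `x · ∇`, which is `∂/∂s` in the logarithmic radius `s = log |x|`. -/
def euler (u : E → ℝ) (x : E) : ℝ :=
  fderiv ℝ u x x

theorem euler_comp_smul (c : ℝ) (u : E → ℝ) (x : E) :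
    euler (fun y => u (c • y)) x = euler u (c • x) := by
  simp [euler, fderiv_comp_smul]

theorem hasDerivAt_comp_exp_smul {u : E → ℝ} {x : E} {t : ℝ}
    (hu : DifferentiableAt ℝ u (exp t • x)) :
    HasDerivAt (fun s => u (exp s • x)) (euler u (exp t • x)) t :=
  hu.hasFDerivAt.comp_hasDerivAt t ((hasDerivAt_exp t).smul_const x)

theorem contDiffOn_euler {n m : WithTop ℕ∞} {U : Set E} (hU : IsOpen U) {u : E → ℝ}
    (hu : ContDiffOn ℝ n u U) (hmn : m + 1 ≤ n) : ContDiffOn ℝ m (euler u) U :=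
  (hu.fderiv_of_isOpen hU hmn).clm_apply contDiffOn_id

variable [FiniteDimensional ℝ E]

/-- The tangential gradient `|x|²∇u - (x · ∇u) x`, normalised so that its divergence is the
spherical Laplacian, see `sphLap`. -/
def tangGrad (u : E → ℝ) (x : E) : E :=
  ‖x‖ ^ 2 • ∇ u x - euler u x • x

/-- The Laplace–Beltrami operator of the unit sphere, acting on functions of `x` through the
angular variable `x / |x|`; it is invariant under dilations, see `sphLap_comp_smul`. -/
def sphLap (u : E → ℝ) (x : E) : ℝ :=
  divergence (tangGrad u) x

theorem fderiv_tangGrad (a u : E → ℝ) (x : E) :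
    fderiv ℝ a x (tangGrad u x) = ‖x‖ ^ 2 * inner ℝ (∇ a x) (∇ u x) - euler u x * euler a x := by
  simp only [tangGrad, euler, map_sub, map_smul, smul_eq_mul, inner_gradient_left]

theorem fderiv_tangGrad_comm (a u : E → ℝ) (x : E) :
    fderiv ℝ a x (tangGrad u x) = fderiv ℝ u x (tangGrad a x) := by
  rw [fderiv_tangGrad, fderiv_tangGrad, real_inner_comm, mul_comm (euler u x)]

theorem fderiv_tangGrad_self_nonneg (a : E → ℝ) (x : E) : 0 ≤ fderiv ℝ a x (tangGrad a x) := by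
  rw [fderiv_tangGrad, sub_nonneg, euler, ← inner_gradient_left, mul_comm (‖x‖ ^ 2),
    ← real_inner_self_eq_norm_sq]
  exact real_inner_mul_inner_self_le _ _

theorem inner_self_tangGrad (u : E → ℝ) (x : E) : inner ℝ x (tangGrad u x) = 0 := by
  simp only [tangGrad, euler, inner_sub_right, inner_smul_right, inner_gradient_right,
    conj_trivial, real_inner_self_eq_norm_sq]
  ring

theorem contDiffOn_tangGrad {n m : WithTop ℕ∞} {U : Set E} (hU : IsOpen U) {u : E → ℝ}
    (hu : ContDiffOn ℝ n u U) (hmn : m + 1 ≤ n) : ContDiffOn ℝ m (tangGrad u) U :=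
  ((contDiff_norm_sq ℝ).contDiffOn.smul (contDiffOn_gradient hU hu hmn)).sub
    ((contDiffOn_euler hU hu hmn).smul contDiffOn_id)

theorem continuousOn_sphLap {U : Set E} (hU : IsOpen U) {u : E → ℝ} (hu : ContDiffOn ℝ 2 u U) :
    ContinuousOn (sphLap u) U :=
  continuousOn_divergence hU (contDiffOn_tangGrad hU hu (by norm_num))

theorem sphLap_eq {U : Set E} (hU : IsOpen U) {u : E → ℝ} (hu : ContDiffOn ℝ 2 u U) {x : E}
    (hx : x ∈ U) :
    sphLap u x = ‖x‖ ^ 2 * Δ u x - (Module.finrank ℝ E - 2) * euler u x - euler (euler u) x := by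
  have hgrad : DifferentiableAt ℝ (∇ u) x :=
    ((contDiffOn_gradient hU hu (m := 1) (by norm_num)).differentiableOn
      one_ne_zero).differentiableAt (hU.mem_nhds hx)
  have heuler : DifferentiableAt ℝ (euler u) x :=
    ((contDiffOn_euler hU hu (m := 1) (by norm_num)).differentiableOn
      one_ne_zero).differentiableAt (hU.mem_nhds hx)
  have hsq : DifferentiableAt ℝ (fun y : E => ‖y‖ ^ 2) x :=
    ((contDiff_norm_sq ℝ).differentiable one_ne_zero) x
  have hradial : divergence (fun y => ‖y‖ ^ 2 • ∇ u y) x = 2 * euler u x + ‖x‖ ^ 2 * Δ u x := by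
    rw [divergence_smul hsq hgrad, divergence_gradient hU hu hx, fderiv_norm_sq_apply]
    simp [euler, inner_gradient_right]
  have hposition : divergence (fun y => euler u y • y) x =
      euler (euler u) x + euler u x * Module.finrank ℝ E := by
    rw [divergence_smul heuler differentiableAt_fun_id, divergence_id]
    rfl
  rw [sphLap, show tangGrad u = fun y => ‖y‖ ^ 2 • ∇ u y - euler u y • y from rfl,
    divergence_sub (hsq.fun_smul hgrad) (heuler.fun_smul differentiableAt_fun_id), hradial,
    hposition]
  ring

theorem tangGrad_comp_smul {c : ℝ} (hc : c ≠ 0) (u : E → ℝ) (x : E) :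
    tangGrad (fun y => u (c • y)) x = c⁻¹ • tangGrad u (c • x) := by
  have hgrad : ∇ (fun y => u (c • y)) x = c • ∇ u (c • x) := by
    simp [gradient, fderiv_comp_smul]
  rw [tangGrad, tangGrad, hgrad, euler_comp_smul, norm_smul, smul_sub, mul_pow, norm_eq_abs, sq_abs,
    smul_smul, smul_smul, smul_smul, smul_smul]
  congr 2 <;> field_simp

theorem sphLap_comp_smul {c : ℝ} (hc : c ≠ 0) (u : E → ℝ) (x : E) :
    sphLap (fun y => u (c • y)) x = sphLap u (c • x) := by
  rw [sphLap, funext (tangGrad_comp_smul hc u), divergence_const_smul,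
    divergence_comp_smul c (tangGrad u), inv_mul_cancel_left₀ hc, sphLap]

theorem two_mul_fderiv_tangGrad_sub_le (a u : E → ℝ) (s : ℝ) (x : E) :
    2 * s * fderiv ℝ a x (tangGrad u x) - s ^ 2 * fderiv ℝ u x (tangGrad u x) ≤
      fderiv ℝ a x (tangGrad a x) := by
  have cauchySchwarz := real_inner_mul_inner_self_le x (∇ a x - s • ∇ u x)
  rw [fderiv_tangGrad, fderiv_tangGrad, fderiv_tangGrad]
  simp only [euler, ← inner_gradient_left]
  simp only [inner_sub_left, inner_sub_right, inner_smul_left, inner_smul_right, conj_trivial,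
    real_inner_self_eq_norm_sq x, real_inner_comm (∇ a x) x, real_inner_comm (∇ u x) x,
    real_inner_comm (∇ u x) (∇ a x)] at cauchySchwarz ⊢
  linarith

theorem fderiv_sq_div_tangGrad_le {χ u : E → ℝ} {x : E} (hχ : DifferentiableAt ℝ χ x)
    (hu : DifferentiableAt ℝ u x) (hne : u x ≠ 0) :
    fderiv ℝ (fun y => χ y ^ 2 / u y) x (tangGrad u x) ≤ fderiv ℝ χ x (tangGrad χ x) := by
  have hquot : HasFDerivAt (fun y => χ y ^ 2 / u y)
      ((2 * (χ x / u x)) • fderiv ℝ χ x - (χ x / u x) ^ 2 • fderiv ℝ u x) x := by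
    simp only [div_eq_mul_inv]
    refine ((hχ.hasFDerivAt.pow 2).mul
      ((hasDerivAt_inv hne).comp_hasFDerivAt x hu.hasFDerivAt)).congr_fderiv ?_
    ext v
    simp only [neg_smul, smul_neg, Function.comp_apply, Nat.add_one_sub_one, pow_one, nsmul_eq_mul,
      Nat.cast_ofNat, add_apply, neg_apply, smul_apply, smul_eq_mul, sub_apply]
    field_simp
    ring
  refine le_of_eq_of_le ?_ (two_mul_fderiv_tangGrad_sub_le χ u (χ x / u x) x)
  simp only [hquot.fderiv, sub_apply, smul_apply, smul_eq_mul]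

variable [MeasurableSpace E] [BorelSpace E]

theorem integrable_fderiv_tangGrad {U : Set E} (hU : IsOpen U) {a u : E → ℝ}
    (ha : ContDiff ℝ 1 a) (hcomp : HasCompactSupport a) (hsupp : tsupport a ⊆ U)
    (hu : ContDiffOn ℝ 1 u U) : Integrable fun x => fderiv ℝ a x (tangGrad u x) := by
  have hzero : support (fun x => fderiv ℝ a x (tangGrad u x)) ⊆ support (fderiv ℝ a) :=
    fun x hx hax => hx (by simp [hax])
  exact integrable_of_continuousOn_of_tsupport_subset hU
    ((ha.continuous_fderiv one_ne_zero).continuousOn.clm_apply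
      (contDiffOn_tangGrad hU hu (m := 0) (by norm_num)).continuousOn)
    ((hcomp.fderiv ℝ).mono hzero)
    ((closure_mono hzero).trans ((tsupport_fderiv_subset ℝ).trans hsupp))

theorem integral_fderiv_tangGrad {U : Set E} (hU : IsOpen U) {a u : E → ℝ}
    (ha : ContDiff ℝ 1 a) (hcomp : HasCompactSupport a) (hsupp : tsupport a ⊆ U)
    (hu : ContDiffOn ℝ 2 u U) :
    ∫ x, fderiv ℝ a x (tangGrad u x) = ∫ x, a x * -sphLap u x := by
  have hT : ContDiffOn ℝ 1 (tangGrad u) U := contDiffOn_tangGrad hU hu (by norm_num)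
  have haT_supp : tsupport (fun x => a x • tangGrad u x) ⊆ tsupport a :=
    tsupport_smul_subset_left _ _
  have haT : ContDiff ℝ 1 fun x => a x • tangGrad u x :=
    contDiff_of_contDiffOn_of_tsupport_subset hU (ha.contDiffOn.smul hT) (haT_supp.trans hsupp)
  have haT_comp : HasCompactSupport fun x => a x • tangGrad u x := hcomp.smul_right
  have hleibniz : ∀ x, fderiv ℝ a x (tangGrad u x) =
      divergence (fun y => a y • tangGrad u y) x + a x * -sphLap u x := by
    intro x
    by_cases hx : x ∈ tsupport a
    · rw [divergence_smul (ha.differentiable one_ne_zero x)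
        ((hT.differentiableOn one_ne_zero).differentiableAt (hU.mem_nhds (hsupp hx))), sphLap]
      ring
    · have hzero : (fun y => a y • tangGrad u y) =ᶠ[𝓝 x] fun _ => 0 :=
        notMem_tsupport_iff_eventuallyEq.1 fun h => hx (haT_supp h)
      rw [divergence_congr hzero, fderiv_of_notMem_tsupport ℝ hx]
      simp [divergence, image_eq_zero_of_notMem_tsupport hx]
  have hint : Integrable fun x => a x * -sphLap u x :=
    integrable_of_continuousOn_of_tsupport_subset hU
      (ha.continuous.continuousOn.mul (continuousOn_sphLap hU hu).neg) hcomp.mul_right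
      ((tsupport_mul_subset_left).trans hsupp)
  simp_rw [hleibniz]
  rw [integral_add (integrable_divergence haT haT_comp) hint,
    integral_divergence_eq_zero haT haT_comp, zero_add]

-- Barta's bound by way of Picone's inequality: test `-Δ_S u / u` against `χ²`.
theorem integral_sq_mul_neg_sphLap_div_le {U : Set E} (hU : IsOpen U) {χ u : E → ℝ}
    (hχ : ContDiff ℝ 1 χ) (hcomp : HasCompactSupport χ) (hsupp : tsupport χ ⊆ U)
    (hu : ContDiffOn ℝ 2 u U) (hne : ∀ x ∈ U, u x ≠ 0) :
    ∫ x, χ x ^ 2 * (-sphLap u x / u x) ≤ ∫ x, fderiv ℝ χ x (tangGrad χ x) := by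
  have hquot_zero : support (fun x => χ x ^ 2 / u x) ⊆ support χ :=
    fun x hx hχx => hx (by simp [hχx])
  have hquot_supp : tsupport (fun x => χ x ^ 2 / u x) ⊆ tsupport χ := closure_mono hquot_zero
  have hquot : ContDiff ℝ 1 fun x => χ x ^ 2 / u x :=
    contDiff_of_contDiffOn_of_tsupport_subset hU
      ((hχ.contDiffOn.pow 2).div (hu.of_le one_le_two) hne) (hquot_supp.trans hsupp)
  have hpicone : ∀ x, fderiv ℝ (fun y => χ y ^ 2 / u y) x (tangGrad u x) ≤
      fderiv ℝ χ x (tangGrad χ x) := by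
    intro x
    by_cases hx : x ∈ tsupport χ
    · exact fderiv_sq_div_tangGrad_le (hχ.differentiable one_ne_zero x)
        ((hu.differentiableOn two_ne_zero).differentiableAt (hU.mem_nhds (hsupp hx)))
        (hne x (hsupp hx))
    · rw [fderiv_of_notMem_tsupport ℝ fun h => hx (hquot_supp h)]
      exact fderiv_tangGrad_self_nonneg χ x
  calc ∫ x, χ x ^ 2 * (-sphLap u x / u x)
      = ∫ x, χ x ^ 2 / u x * -sphLap u x := by simp only [mul_div_assoc', div_mul_eq_mul_div]
    _ = ∫ x, fderiv ℝ (fun y => χ y ^ 2 / u y) x (tangGrad u x) :=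
        (integral_fderiv_tangGrad hU hquot (hcomp.mono hquot_zero)
          (hquot_supp.trans hsupp) hu).symm
    _ ≤ ∫ x, fderiv ℝ χ x (tangGrad χ x) :=
        integral_mono (integrable_fderiv_tangGrad hU hquot (hcomp.mono hquot_zero)
          (hquot_supp.trans hsupp) (hu.of_le one_le_two))
          (integrable_fderiv_tangGrad isOpen_univ hχ hcomp (subset_univ _) hχ.contDiffOn) hpicone

end Spherical

/-! ### Barta measures -/

section Barta

variable {E : Type*} [NormedAddCommGroup E] [InnerProductSpace ℝ E] [FiniteDimensional ℝ E]
  [MeasurableSpace E] [BorelSpace E]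

/-- A probability measure `ν` on a compact set `K ⊆ U`, with density at most `M`, against which
`-Δ_S u / u` has mean at most `Λ` for every positive `u` on `U`. It stands in for the squared first
Dirichlet eigenfunction, which attains the smallest `Λ` but lacks compact support. -/
structure IsBartaMeasure (U K : Set E) (M : ℝ≥0) (Λ : ℝ) (ν : Measure E) : Prop where
  isProbabilityMeasure : IsProbabilityMeasure ν
  isCompact : IsCompact K
  subset : K ⊆ U
  ae_mem : ∀ᵐ x ∂ν, x ∈ K
  le_smul : ν ≤ M • volume
  integral_le : ∀ u : E → ℝ, ContDiffOn ℝ 2 u U → (∀ x ∈ U, 0 < u x) →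
    ∫ x, -sphLap u x / u x ∂ν ≤ Λ

theorem exists_isBartaMeasure_of_rayleigh_le {U : Set E} (hU : IsOpen U) {χ : E → ℝ} {Λ : ℝ}
    (hχ : ContDiff ℝ 1 χ) (hcomp : HasCompactSupport χ) (hsupp : tsupport χ ⊆ U)
    (hmass : 0 < ∫ x, χ x ^ 2)
    (hrayleigh : ∫ x, fderiv ℝ χ x (tangGrad χ x) ≤ Λ * ∫ x, χ x ^ 2) :
    ∃ (K : Set E) (M : ℝ≥0) (ν : Measure E), IsBartaMeasure U K M Λ ν := by
  set m := ∫ x, χ x ^ 2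
  set d : E → ℝ≥0∞ := fun x => ENNReal.ofReal (χ x ^ 2 / m)
  have hd_meas : Measurable d := ((hχ.continuous.pow 2).div_const m).measurable.ennreal_ofReal
  obtain ⟨b, hb⟩ := hcomp.exists_bound_of_continuous hχ.continuous
  refine ⟨tsupport χ, (b ^ 2 / m).toNNReal, volume.withDensity d, ⟨?_⟩, hcomp, hsupp, ?_, ?_, ?_⟩
  · have hint : Integrable fun x => χ x ^ 2 / m :=
      ((hχ.continuous.pow 2).integrable_of_hasCompactSupport
        (hcomp.mono fun x hx hχx => hx (by simp [hχx]))).div_const m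
    rw [withDensity_apply _ MeasurableSet.univ, Measure.restrict_univ,
      ← ofReal_integral_eq_lintegral_ofReal hint (ae_of_all _ fun x => by positivity),
      integral_div, div_self hmass.ne', ENNReal.ofReal_one]
  · refine (ae_withDensity_iff hd_meas).2 (ae_of_all _ fun x hx => subset_tsupport χ fun hχx => ?_)
    exact hx (by simp [d, hχx])
  · calc volume.withDensity d ≤ volume.withDensity fun _ => ENNReal.ofReal (b ^ 2 / m) := by
          refine withDensity_mono (ae_of_all _ fun x => ENNReal.ofReal_le_ofReal ?_)
          gcongr ?_ / m
          exact sq_le_sq' (neg_le_of_abs_le (hb x)) (le_of_abs_le (hb x))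
      _ = (b ^ 2 / m).toNNReal • volume := withDensity_const _
  · intro u hu hpos
    calc ∫ x, -sphLap u x / u x ∂volume.withDensity d
        = ∫ x, m⁻¹ * (χ x ^ 2 * (-sphLap u x / u x)) := by
          rw [integral_withDensity_eq_integral_toReal_smul hd_meas
            (ae_of_all _ fun x => ENNReal.ofReal_lt_top)]
          refine integral_congr_ae (ae_of_all _ fun x => ?_)
          simp only [d, ENNReal.toReal_ofReal (show 0 ≤ χ x ^ 2 / m by positivity), smul_eq_mul]
          ring
      _ = m⁻¹ * ∫ x, χ x ^ 2 * (-sphLap u x / u x) := integral_const_mul _ _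
      _ ≤ m⁻¹ * (Λ * m) := by
          gcongr
          exact (integral_sq_mul_neg_sphLap_div_le hU hχ hcomp hsupp hu
            fun x hx => (hpos x hx).ne').trans hrayleigh
      _ = Λ := by field_simp

end Barta

/-! ### The eigenfunction on the cone -/

section Cone

variable {N : ℕ} {Ω : Set (Euc N)} {φ : Euc N → ℝ} {lam1 ρ : ℝ}

theorem lap_eq_laplacian (u : Euc N → ℝ) : lap N u = Δ u := by
  simp [laplacian_eq_iteratedFDeriv_orthonormalBasis u (EuclideanSpace.basisFun (Fin N) ℝ),
    funext_iff, lap]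

theorem IsConeDomain.isOpen_cone (hΩ : IsConeDomain N Ω) : IsOpen (cone N Ω) := by
  obtain ⟨V, hV, hVΩ⟩ := isOpen_induced_iff.1 hΩ.2.2
  have hnormalize : ContinuousOn (fun x : Euc N => ‖x‖⁻¹ • x) {x | x ≠ 0} :=
    (continuousOn_id.norm.inv₀ fun x hx => norm_ne_zero_iff.2 hx).smul continuousOn_id
  convert hnormalize.isOpen_inter_preimage isOpen_ne hV using 1
  ext x
  refine and_congr_right fun hx => ?_
  have hsphere : ‖x‖⁻¹ • x ∈ Metric.sphere (0 : Euc N) 1 := by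
    simp [norm_smul, norm_ne_zero_iff.2 hx]
  exact (Set.ext_iff.1 hVΩ ⟨_, hsphere⟩).symm

theorem IsConeDomain.cone_nonempty (hΩ : IsConeDomain N Ω) : (cone N Ω).Nonempty := by
  obtain ⟨ω, hω⟩ := hΩ.2.1.nonempty
  have hnorm : ‖ω‖ = 1 := by simpa using hΩ.1 hω
  exact ⟨ω, norm_ne_zero_iff.1 (by simp [hnorm]), by simpa [hnorm] using hω⟩

theorem coneGT_eq_inter (hρ : 0 ≤ ρ) : coneGT N ρ Ω = cone N Ω ∩ {x | ρ < ‖x‖} := by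
  ext x
  exact ⟨fun h => ⟨⟨norm_pos_iff.1 (hρ.trans_lt h.1), h.2⟩, h.1⟩, fun h => ⟨h.2, h.1.2⟩⟩

theorem isOpen_coneGT (hopen : IsOpen (cone N Ω)) (hρ : 0 ≤ ρ) : IsOpen (coneGT N ρ Ω) := by
  rw [coneGT_eq_inter hρ]
  exact hopen.inter (isOpen_lt continuous_const continuous_norm)

theorem normalize_smul {c : ℝ} (hc : 0 < c) (x : Euc N) : ‖c • x‖⁻¹ • (c • x) = ‖x‖⁻¹ • x := by
  rw [norm_smul, smul_smul, Real.norm_of_nonneg hc.le, mul_inv, mul_right_comm,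
    inv_mul_cancel₀ hc.ne', one_mul]

theorem smul_mem_cone_iff {c : ℝ} (hc : 0 < c) {x : Euc N} : c • x ∈ cone N Ω ↔ x ∈ cone N Ω := by
  simp only [cone, mem_ofPred_eq, normalize_smul hc, ne_eq, smul_eq_zero, hc.ne', false_or]

theorem smul_mem_coneGT {c : ℝ} (hc : 1 ≤ c) {x : Euc N} (hx : x ∈ coneGT N ρ Ω) :
    c • x ∈ coneGT N ρ Ω := by
  refine ⟨?_, by rw [normalize_smul (by positivity)]; exact hx.2⟩
  rw [norm_smul, Real.norm_of_nonneg (by positivity)]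
  exact hx.1.trans_le (le_mul_of_one_le_left (norm_nonneg x) hc)

theorem exists_mem_cone_norm_eq (hne : (cone N Ω).Nonempty) {r : ℝ} (hr : 0 < r) :
    ∃ x ∈ cone N Ω, ‖x‖ = r := by
  obtain ⟨x, hx⟩ := hne
  have hx_pos : 0 < ‖x‖ := norm_pos_iff.2 hx.1
  refine ⟨(r / ‖x‖) • x, (smul_mem_cone_iff (by positivity)).2 hx, ?_⟩
  rw [norm_smul, Real.norm_of_nonneg (by positivity), div_mul_cancel₀ _ hx_pos.ne']

theorem coneGT_nonempty (hne : (cone N Ω).Nonempty) (hρ : 0 ≤ ρ) : (coneGT N ρ Ω).Nonempty := by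
  obtain ⟨x, hx, hxr⟩ := exists_mem_cone_norm_eq hne (r := ρ + 1) (by linarith)
  exact ⟨x, by linarith, hx.2⟩

/-- The 0-homogeneous extension of `φ` to the cone over `Ω`, and `0` off the cone. -/
def conicExt (Ω : Set (Euc N)) (φ : Euc N → ℝ) : Euc N → ℝ :=
  (cone N Ω).indicator fun x => φ (‖x‖⁻¹ • x)

theorem conicExt_smul {c : ℝ} (hc : 0 < c) (x : Euc N) :
    conicExt Ω φ (c • x) = conicExt Ω φ x := by
  by_cases hx : x ∈ cone N Ω
  · rw [conicExt, indicator_of_mem hx, indicator_of_mem ((smul_mem_cone_iff hc).2 hx),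
      normalize_smul hc]
  · rw [conicExt, indicator_of_notMem hx,
      indicator_of_notMem fun hcx => hx ((smul_mem_cone_iff hc).1 hcx)]

theorem DirichletEigenpair.contDiffOn_conicExt (h : DirichletEigenpair N Ω lam1 φ) :
    ContDiffOn ℝ 2 (conicExt Ω φ) (cone N Ω) :=
  h.smoothExt.congr fun _ hx => indicator_of_mem hx _

theorem DirichletEigenpair.conicExt_nonneg (h : DirichletEigenpair N Ω lam1 φ) (x : Euc N) :
    0 ≤ conicExt Ω φ x :=
  indicator_nonneg (fun _ hy => (h.pos _ hy.2).le) x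

theorem DirichletEigenpair.conicExt_pos (h : DirichletEigenpair N Ω lam1 φ) {x : Euc N}
    (hx : x ∈ cone N Ω) : 0 < conicExt Ω φ x := by
  rw [conicExt, indicator_of_mem hx]
  exact h.pos _ hx.2

theorem DirichletEigenpair.conicExt_le_one (h : DirichletEigenpair N Ω lam1 φ) (x : Euc N) :
    conicExt Ω φ x ≤ 1 :=
  indicator_apply_le' (fun hx => h.le_one _ (subset_closure hx.2)) fun _ => zero_le_one

theorem DirichletEigenpair.euler_conicExt (h : DirichletEigenpair N Ω lam1 φ)
    (hopen : IsOpen (cone N Ω)) {x : Euc N} (hx : x ∈ cone N Ω) : euler (conicExt Ω φ) x = 0 := by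
  have hray := hasDerivAt_comp_exp_smul (u := conicExt Ω φ) (x := x) (t := 0) <| by
    simpa using (h.contDiffOn_conicExt.differentiableOn two_ne_zero).differentiableAt
      (hopen.mem_nhds hx)
  simp only [conicExt_smul (exp_pos _), exp_zero, one_smul] at hray
  exact hray.unique (hasDerivAt_const 0 _)

theorem DirichletEigenpair.sphLap_conicExt (h : DirichletEigenpair N Ω lam1 φ)
    (hopen : IsOpen (cone N Ω)) {x : Euc N} (hx : x ∈ cone N Ω) :
    sphLap (conicExt Ω φ) x = -lam1 * conicExt Ω φ x := by
  have heuler : euler (conicExt Ω φ) =ᶠ[𝓝 x] fun _ => 0 := by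
    filter_upwards [hopen.mem_nhds hx] with y hy using h.euler_conicExt hopen hy
  have hconic : conicExt Ω φ =ᶠ[𝓝 x] fun y => φ (‖y‖⁻¹ • y) := by
    filter_upwards [hopen.mem_nhds hx] with y hy using indicator_of_mem hy _
  have hnorm : 0 < ‖x‖ := norm_pos_iff.2 hx.1
  have hlap : Δ (conicExt Ω φ) x = -lam1 * ‖x‖ ^ (-(2 : ℝ)) * conicExt Ω φ x := by
    rw [(laplacian_congr_nhds hconic).eq_of_nhds, ← lap_eq_laplacian, h.eigen x hx,
      hconic.eq_of_nhds]
  have heuler₂ : euler (euler (conicExt Ω φ)) x = 0 := by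
    simp [euler.eq_def (euler _), heuler.fderiv_eq]
  rw [sphLap_eq hopen h.contDiffOn_conicExt hx, h.euler_conicExt hopen hx, heuler₂, hlap,
    rpow_neg hnorm.le, rpow_two]
  field_simp
  ring

/-- The part of the annulus `a ≤ |x| ≤ b` in the directions of `closure Ω` where `φ ≥ ε`; unlike
the cone over `Ω` in that annulus it is compact. -/
def truncatedCone (Ω : Set (Euc N)) (φ : Euc N → ℝ) (ε a b : ℝ) : Set (Euc N) :=
  {x | a ≤ ‖x‖ ∧ ‖x‖ ≤ b ∧ ‖x‖⁻¹ • x ∈ closure Ω ∧ ε ≤ φ (‖x‖⁻¹ • x)}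

theorem DirichletEigenpair.isCompact_truncatedCone (h : DirichletEigenpair N Ω lam1 φ)
    (ε : ℝ) {a : ℝ} (ha : 0 < a) (b : ℝ) : IsCompact (truncatedCone Ω φ ε a b) := by
  have hlevel : IsClosed (closure Ω ∩ φ ⁻¹' Ici ε) :=
    h.contOn.preimage_isClosed_of_isClosed isClosed_closure isClosed_Ici
  have hnormalize : ContinuousOn (fun x : Euc N => ‖x‖⁻¹ • x) {x | a ≤ ‖x‖} :=
    (continuousOn_id.norm.inv₀ fun x hx => (ha.trans_le hx).ne').smul continuousOn_id
  have hclosed := hnormalize.preimage_isClosed_of_isClosed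
    (isClosed_le continuous_const continuous_norm) hlevel
  have hinter : truncatedCone Ω φ ε a b = Metric.closedBall 0 b ∩
      ({x | a ≤ ‖x‖} ∩ (fun x => ‖x‖⁻¹ • x) ⁻¹' (closure Ω ∩ φ ⁻¹' Ici ε)) := by
    refine Set.ext fun x => ?_
    simp only [truncatedCone, mem_ofPred_eq, mem_inter_iff, mem_closedBall_zero_iff, mem_preimage,
      mem_Ici]
    exact and_left_comm
  exact hinter ▸ (isCompact_closedBall 0 b).inter_right hclosed

theorem DirichletEigenpair.truncatedCone_subset (h : DirichletEigenpair N Ω lam1 φ)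
    {ε a b : ℝ} (hε : 0 < ε) (ha : ρ < a) : truncatedCone Ω φ ε a b ⊆ coneGT N ρ Ω := by
  rintro x ⟨hax, _, hclosure, hεφ⟩
  refine ⟨ha.trans_le hax, by_contra fun hΩ => ?_⟩
  linarith [h.bdryZero _ ⟨hclosure, hΩ⟩]

theorem conicExt_lt_of_notMem_truncatedCone {ε a b : ℝ} (hε : 0 < ε) {x : Euc N}
    (hx : x ∉ truncatedCone Ω φ ε a b) (hax : a ≤ ‖x‖) (hxb : ‖x‖ ≤ b) : conicExt Ω φ x < ε := by
  by_cases hcone : x ∈ cone N Ω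
  · rw [conicExt, indicator_of_mem hcone]
    exact not_le.1 fun hεφ => hx ⟨hax, hxb, subset_closure hcone.2, hεφ⟩
  · rwa [conicExt, indicator_of_notMem hcone]

end Cone

/-! ### Truncating the eigenfunction -/

section Truncation

/-- The primitive, vanishing at `0`, of the `k`-th power of a cutoff that is `0` on `s ≤ 1/n` and
`1` on `s ≥ 2/n`: a `C¹` approximation of `t` for `t ≥ 0` that vanishes near `0`. -/
def truncPrimitive (k n : ℕ) (t : ℝ) : ℝ :=
  ∫ s in (0 : ℝ)..t, smoothTransition (n * s - 1) ^ k

theorem continuous_cutoff_pow (k n : ℕ) :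
    Continuous fun s : ℝ => smoothTransition (n * s - 1) ^ k := by
  fun_prop

theorem hasDerivAt_truncPrimitive (k n : ℕ) (t : ℝ) :
    HasDerivAt (truncPrimitive k n) (smoothTransition (n * t - 1) ^ k) t :=
  ((continuous_cutoff_pow k n).integral_hasStrictDerivAt 0 t).hasDerivAt

theorem contDiff_truncPrimitive (k n : ℕ) : ContDiff ℝ 1 (truncPrimitive k n) := by
  refine contDiff_one_iff_deriv.2
    ⟨fun t => (hasDerivAt_truncPrimitive k n t).differentiableAt, ?_⟩
  rw [deriv_eq (hasDerivAt_truncPrimitive k n)]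
  exact continuous_cutoff_pow k n

theorem truncPrimitive_eq_zero {k n : ℕ} (hk : k ≠ 0) {t : ℝ} (ht : t ≤ 1 / n) :
    truncPrimitive k n t = 0 := by
  refine intervalIntegral.integral_zero_ae (ae_of_all _ fun s hs => ?_)
  have hs' : s ≤ 1 / n := (mem_Ioc.1 hs).2.trans (max_le (by positivity) ht)
  have hns : n * s ≤ 1 :=
    (mul_le_mul_of_nonneg_left hs' n.cast_nonneg).trans (by simpa using mul_inv_le_one)
  rw [smoothTransition.zero_of_nonpos (by linarith), zero_pow hk]

theorem truncPrimitive_nonneg (k n : ℕ) {t : ℝ} (ht : 0 ≤ t) : 0 ≤ truncPrimitive k n t :=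
  intervalIntegral.integral_nonneg ht fun _ _ => pow_nonneg (smoothTransition.nonneg _) k

theorem truncPrimitive_le (k n : ℕ) {t : ℝ} (ht : 0 ≤ t) : truncPrimitive k n t ≤ t := by
  calc truncPrimitive k n t ≤ ∫ _ in (0 : ℝ)..t, (1 : ℝ) :=
        intervalIntegral.integral_mono_on ht ((continuous_cutoff_pow k n).intervalIntegrable _ _)
          intervalIntegrable_const fun _ _ =>
            pow_le_one₀ (smoothTransition.nonneg _) (smoothTransition.le_one _)
    _ = t := by simp

theorem tendsto_truncPrimitive (k : ℕ) {t : ℝ} (ht : 0 ≤ t) :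
    Tendsto (fun n : ℕ => truncPrimitive k n t) atTop (𝓝 t) := by
  have hlim : ∀ s ∈ uIoc 0 t,
      Tendsto (fun n : ℕ => smoothTransition (n * s - 1) ^ k) atTop (𝓝 1) := by
    intro s hs
    have hs_pos : 0 < s := (uIoc_of_le ht ▸ hs).1
    refine tendsto_const_nhds.congr' ?_
    filter_upwards [(tendsto_natCast_atTop_atTop (R := ℝ)).eventually_ge_atTop (2 / s)] with n hn
    rw [smoothTransition.one_of_one_le (by linarith [(div_le_iff₀ hs_pos).1 hn]), one_pow]
  simpa [truncPrimitive] using intervalIntegral.tendsto_integral_filter_of_dominated_convergence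
    (μ := volume) (fun _ => 1)
    (Eventually.of_forall fun n => (continuous_cutoff_pow k n).aestronglyMeasurable)
    (Eventually.of_forall fun n => ae_of_all _ fun s _ => by
      rw [norm_pow, Real.norm_of_nonneg (smoothTransition.nonneg _)]
      exact pow_le_one₀ (smoothTransition.nonneg _) (smoothTransition.le_one _))
    intervalIntegrable_const (ae_of_all _ hlim)

variable {E : Type*} [NormedAddCommGroup E]

/-- A smooth radial bump function, positive exactly on the annulus `a < |x| < b`. -/
def annulusBump (a b : ℝ) (x : E) : ℝ :=
  smoothTransition (‖x‖ ^ 2 - a ^ 2) * smoothTransition (b ^ 2 - ‖x‖ ^ 2)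

theorem annulusBump_nonneg (a b : ℝ) (x : E) : 0 ≤ annulusBump a b x :=
  mul_nonneg (smoothTransition.nonneg _) (smoothTransition.nonneg _)

theorem annulusBump_pos {a b : ℝ} (ha : 0 ≤ a) {x : E} (hax : a < ‖x‖) (hxb : ‖x‖ < b) :
    0 < annulusBump a b x :=
  mul_pos (smoothTransition.pos_of_pos (by nlinarith))
    (smoothTransition.pos_of_pos (by nlinarith [norm_nonneg x]))

theorem mem_Icc_of_annulusBump_ne_zero {a b : ℝ} (hb : 0 ≤ b) {x : E}
    (hx : annulusBump a b x ≠ 0) : ‖x‖ ∈ Icc a b := by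
  refine ⟨not_lt.1 fun hxa => hx ?_, not_lt.1 fun hbx => hx ?_⟩
  · rw [annulusBump, smoothTransition.zero_of_nonpos (by nlinarith [norm_nonneg x]), zero_mul]
  · rw [annulusBump, mul_comm, smoothTransition.zero_of_nonpos (by nlinarith), zero_mul]

variable [InnerProductSpace ℝ E]

theorem contDiff_annulusBump (a b : ℝ) : ContDiff ℝ 1 (annulusBump a b : E → ℝ) :=
  (smoothTransition.contDiff.comp ((contDiff_norm_sq ℝ).sub contDiff_const)).mul
    (smoothTransition.contDiff.comp (contDiff_const.sub (contDiff_norm_sq ℝ)))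

theorem hasCompactSupport_annulusBump [FiniteDimensional ℝ E] {a b : ℝ} (hb : 0 ≤ b) :
    HasCompactSupport (annulusBump a b : E → ℝ) :=
  HasCompactSupport.intro (isCompact_closedBall 0 b) fun _ hx => by_contra fun hne =>
    hx (mem_closedBall_zero_iff.2 (mem_Icc_of_annulusBump_ne_zero hb hne).2)

theorem fderiv_annulusBump_of_inner_eq_zero (a b : ℝ) {x v : E} (hxv : inner ℝ x v = 0) :
    fderiv ℝ (annulusBump a b) x v = 0 := by
  let g : ℝ → ℝ := fun s => smoothTransition (s - a ^ 2) * smoothTransition (b ^ 2 - s)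
  have hg : DifferentiableAt ℝ g (‖x‖ ^ 2) := by
    have hS : Differentiable ℝ smoothTransition :=
      (smoothTransition.contDiff (n := 1)).differentiable one_ne_zero
    exact (hS.comp (differentiable_id.sub_const _)).mul
      (hS.comp (differentiable_id.const_sub _)) |>.differentiableAt
  have hradial := hg.hasDerivAt.comp_hasFDerivAt x (hasStrictFDerivAt_norm_sq x).hasFDerivAt
  rw [show annulusBump a b = g ∘ fun y : E => ‖y‖ ^ 2 from rfl, hradial.fderiv]
  simp [hxv]

end Truncation

/-! ### Almost optimal Barta measures on a cone -/

section Rayleigh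

variable {N : ℕ} {Ω : Set (Euc N)} {φ : Euc N → ℝ} {lam1 ρ a b : ℝ}

/-- The eigenfunction truncated to a compact part of the cone. The factors are chosen so that
tangential derivatives of the case `k = 1` square to those of the case `k = 2`. -/
def truncEigen (Ω : Set (Euc N)) (φ : Euc N → ℝ) (a b : ℝ) (k n : ℕ) (x : Euc N) : ℝ :=
  annulusBump a b x ^ k * truncPrimitive k n (conicExt Ω φ x)

theorem DirichletEigenpair.tsupport_truncEigen_subset (h : DirichletEigenpair N Ω lam1 φ)
    (ha : 0 < a) (hab : a < b) {k n : ℕ} (hk : k ≠ 0) (hn : n ≠ 0) :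
    tsupport (truncEigen Ω φ a b k n) ⊆ truncatedCone Ω φ (1 / n) a b := by
  refine closure_minimal (fun x hx => by_contra fun hmem => ?_)
    (h.isCompact_truncatedCone _ ha b).isClosed
  have hbump := mem_Icc_of_annulusBump_ne_zero (ha.trans hab).le
    (ne_zero_pow hk (left_ne_zero_of_mul hx))
  have hlt := conicExt_lt_of_notMem_truncatedCone (by positivity) hmem hbump.1 hbump.2
  exact right_ne_zero_of_mul hx (truncPrimitive_eq_zero hk hlt.le)

theorem DirichletEigenpair.hasCompactSupport_truncEigen (h : DirichletEigenpair N Ω lam1 φ)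
    (ha : 0 < a) (hab : a < b) {k n : ℕ} (hk : k ≠ 0) (hn : n ≠ 0) :
    HasCompactSupport (truncEigen Ω φ a b k n) :=
  (h.isCompact_truncatedCone _ ha b).of_isClosed_subset (isClosed_tsupport _)
    (h.tsupport_truncEigen_subset ha hab hk hn)

theorem DirichletEigenpair.tsupport_truncEigen_subset_coneGT (h : DirichletEigenpair N Ω lam1 φ)
    (hρ : 0 ≤ ρ) (ha : ρ < a) (hab : a < b) {k n : ℕ} (hk : k ≠ 0) (hn : n ≠ 0) :
    tsupport (truncEigen Ω φ a b k n) ⊆ coneGT N ρ Ω :=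
  (h.tsupport_truncEigen_subset (hρ.trans_lt ha) hab hk hn).trans
    (h.truncatedCone_subset (by positivity) ha)

theorem DirichletEigenpair.contDiff_truncEigen (h : DirichletEigenpair N Ω lam1 φ)
    (hopen : IsOpen (cone N Ω)) (ha : 0 < a) (hab : a < b) {k n : ℕ} (hk : k ≠ 0) (hn : n ≠ 0) :
    ContDiff ℝ 1 (truncEigen Ω φ a b k n) := by
  refine contDiff_of_contDiffOn_of_tsupport_subset hopen (((contDiff_annulusBump a b).pow
    k).contDiffOn.mul ((contDiff_truncPrimitive k n).comp_contDiffOn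
      (h.contDiffOn_conicExt.of_le one_le_two))) ?_
  exact (h.tsupport_truncEigen_subset_coneGT le_rfl ha hab hk hn).trans
    ((coneGT_eq_inter le_rfl).trans_subset inter_subset_left)

theorem DirichletEigenpair.fderiv_truncEigen_tangGrad (h : DirichletEigenpair N Ω lam1 φ)
    (hopen : IsOpen (cone N Ω)) (k n : ℕ) {x : Euc N} (hx : x ∈ cone N Ω) (w : Euc N → ℝ) :
    fderiv ℝ (truncEigen Ω φ a b k n) x (tangGrad w x) =
      (annulusBump a b x * smoothTransition (n * conicExt Ω φ x - 1)) ^ k *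
        fderiv ℝ (conicExt Ω φ) x (tangGrad w x) := by
  have hΦ : DifferentiableAt ℝ (conicExt Ω φ) x :=
    (h.contDiffOn_conicExt.differentiableOn two_ne_zero).differentiableAt (hopen.mem_nhds hx)
  have hbump : DifferentiableAt ℝ (annulusBump a b) x :=
    (contDiff_annulusBump a b).differentiable one_ne_zero x
  have hprod := (hbump.hasFDerivAt.pow k).mul
    ((hasDerivAt_truncPrimitive k n _).comp_hasFDerivAt x hΦ.hasFDerivAt)
  have hradial := fderiv_annulusBump_of_inner_eq_zero a b (inner_self_tangGrad w x)
  rw [HasFDerivAt.fderiv (f := truncEigen Ω φ a b k n) hprod]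
  simp [hradial, mul_pow, mul_assoc]

theorem DirichletEigenpair.fderiv_truncEigen_tangGrad_self (h : DirichletEigenpair N Ω lam1 φ)
    (hopen : IsOpen (cone N Ω)) (n : ℕ) {x : Euc N} (hx : x ∈ cone N Ω) :
    fderiv ℝ (truncEigen Ω φ a b 1 n) x (tangGrad (truncEigen Ω φ a b 1 n) x) =
      fderiv ℝ (truncEigen Ω φ a b 2 n) x (tangGrad (conicExt Ω φ) x) := by
  rw [h.fderiv_truncEigen_tangGrad hopen 1 n hx,
    fderiv_tangGrad_comm (conicExt Ω φ) (truncEigen Ω φ a b 1 n),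
    h.fderiv_truncEigen_tangGrad hopen 1 n hx, h.fderiv_truncEigen_tangGrad hopen 2 n hx]
  ring

theorem DirichletEigenpair.integral_fderiv_truncEigen_tangGrad
    (h : DirichletEigenpair N Ω lam1 φ) (hopen : IsOpen (cone N Ω)) (ha : 0 < a) (hab : a < b)
    {n : ℕ} (hn : n ≠ 0) :
    ∫ x, fderiv ℝ (truncEigen Ω φ a b 1 n) x (tangGrad (truncEigen Ω φ a b 1 n) x) =
      lam1 * ∫ x, truncEigen Ω φ a b 2 n x * conicExt Ω φ x := by
  have hsupp : ∀ {k : ℕ}, k ≠ 0 → tsupport (truncEigen Ω φ a b k n) ⊆ cone N Ω := fun hk =>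
    (h.tsupport_truncEigen_subset_coneGT le_rfl ha hab hk hn).trans
      ((coneGT_eq_inter le_rfl).trans_subset inter_subset_left)
  calc ∫ x, fderiv ℝ (truncEigen Ω φ a b 1 n) x (tangGrad (truncEigen Ω φ a b 1 n) x)
      = ∫ x, fderiv ℝ (truncEigen Ω φ a b 2 n) x (tangGrad (conicExt Ω φ) x) := by
        refine integral_congr_ae (ae_of_all _ fun x => ?_)
        by_cases hx : x ∈ cone N Ω
        · exact h.fderiv_truncEigen_tangGrad_self hopen n hx
        · simp [fderiv_of_notMem_tsupport ℝ fun hmem => hx (hsupp one_ne_zero hmem),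
            fderiv_of_notMem_tsupport ℝ fun hmem => hx (hsupp two_ne_zero hmem)]
    _ = ∫ x, truncEigen Ω φ a b 2 n x * -sphLap (conicExt Ω φ) x :=
        integral_fderiv_tangGrad hopen (h.contDiff_truncEigen hopen ha hab two_ne_zero hn)
          (h.hasCompactSupport_truncEigen ha hab two_ne_zero hn) (hsupp two_ne_zero)
          h.contDiffOn_conicExt
    _ = ∫ x, lam1 * (truncEigen Ω φ a b 2 n x * conicExt Ω φ x) := by
        refine integral_congr_ae (ae_of_all _ fun x => ?_)
        by_cases hx : x ∈ cone N Ω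
        · simp only [h.sphLap_conicExt hopen hx]
          ring
        · simp [image_eq_zero_of_notMem_tsupport fun hmem => hx (hsupp two_ne_zero hmem)]
    _ = lam1 * ∫ x, truncEigen Ω φ a b 2 n x * conicExt Ω φ x := integral_const_mul _ _

theorem DirichletEigenpair.aestronglyMeasurable_conicExt (h : DirichletEigenpair N Ω lam1 φ)
    (hopen : IsOpen (cone N Ω)) : AEStronglyMeasurable (conicExt Ω φ) := by
  rw [conicExt, aestronglyMeasurable_indicator_iff hopen.measurableSet]
  exact h.smoothExt.continuousOn.aestronglyMeasurable hopen.measurableSet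

theorem DirichletEigenpair.truncEigen_nonneg (h : DirichletEigenpair N Ω lam1 φ) (k n : ℕ)
    (x : Euc N) : 0 ≤ truncEigen Ω φ a b k n x :=
  mul_nonneg (pow_nonneg (annulusBump_nonneg a b x) k)
    (truncPrimitive_nonneg k n (h.conicExt_nonneg x))

theorem DirichletEigenpair.truncEigen_le (h : DirichletEigenpair N Ω lam1 φ) (k n : ℕ)
    (x : Euc N) : truncEigen Ω φ a b k n x ≤ annulusBump a b x ^ k :=
  mul_le_of_le_one_right (pow_nonneg (annulusBump_nonneg a b x) k)
    ((truncPrimitive_le k n (h.conicExt_nonneg x)).trans (h.conicExt_le_one x))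

theorem integrable_annulusBump_sq (a : ℝ) (hb : 0 ≤ b) :
    Integrable fun x : Euc N => annulusBump a b x ^ 2 :=
  ((contDiff_annulusBump a b).continuous.pow 2).integrable_of_hasCompactSupport
    ((hasCompactSupport_annulusBump hb).mono fun _ hx => ne_zero_pow two_ne_zero hx)

theorem DirichletEigenpair.tendsto_truncEigen (h : DirichletEigenpair N Ω lam1 φ) (k : ℕ)
    (x : Euc N) : Tendsto (fun n => truncEigen Ω φ a b k n x) atTop
      (𝓝 (annulusBump a b x ^ k * conicExt Ω φ x)) :=
  (tendsto_truncPrimitive k (h.conicExt_nonneg x)).const_mul _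

theorem DirichletEigenpair.tendsto_integral_truncEigen_sq (h : DirichletEigenpair N Ω lam1 φ)
    (hopen : IsOpen (cone N Ω)) (ha : 0 < a) (hab : a < b) :
    Tendsto (fun n => ∫ x, truncEigen Ω φ a b 1 n x ^ 2) atTop
      (𝓝 (∫ x, (annulusBump a b x * conicExt Ω φ x) ^ 2)) := by
  refine tendsto_integral_filter_of_dominated_convergence _ ?_ ?_
    (integrable_annulusBump_sq a (ha.trans hab).le) (ae_of_all _ fun x => ?_)
  · filter_upwards [eventually_ne_atTop 0] with n hn
    exact ((h.contDiff_truncEigen hopen ha hab one_ne_zero hn).continuous.pow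
      2).aestronglyMeasurable
  · refine Eventually.of_forall fun n => ae_of_all _ fun x => ?_
    rw [Real.norm_of_nonneg (sq_nonneg _)]
    exact pow_le_pow_left₀ (h.truncEigen_nonneg 1 n x) (by simpa using h.truncEigen_le 1 n x) 2
  · simpa using (h.tendsto_truncEigen 1 x).pow 2

theorem DirichletEigenpair.tendsto_integral_truncEigen_mul (h : DirichletEigenpair N Ω lam1 φ)
    (hopen : IsOpen (cone N Ω)) (ha : 0 < a) (hab : a < b) :
    Tendsto (fun n => ∫ x, truncEigen Ω φ a b 2 n x * conicExt Ω φ x) atTop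
      (𝓝 (∫ x, (annulusBump a b x * conicExt Ω φ x) ^ 2)) := by
  refine tendsto_integral_filter_of_dominated_convergence _ ?_ ?_
    (integrable_annulusBump_sq a (ha.trans hab).le) (ae_of_all _ fun x => ?_)
  · filter_upwards [eventually_ne_atTop 0] with n hn
    exact (h.contDiff_truncEigen hopen ha hab two_ne_zero hn).continuous.aestronglyMeasurable.mul
      (h.aestronglyMeasurable_conicExt hopen)
  · refine Eventually.of_forall fun n => ae_of_all _ fun x => ?_
    rw [Real.norm_of_nonneg (mul_nonneg (h.truncEigen_nonneg 2 n x) (h.conicExt_nonneg x))]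
    exact (mul_le_of_le_one_right (h.truncEigen_nonneg 2 n x) (h.conicExt_le_one x)).trans
      (h.truncEigen_le 2 n x)
  · convert (h.tendsto_truncEigen 2 x).mul_const (conicExt Ω φ x) using 2
    ring

theorem DirichletEigenpair.integral_sq_annulusBump_mul_conicExt_pos
    (h : DirichletEigenpair N Ω lam1 φ) (hopen : IsOpen (cone N Ω)) (hne : (cone N Ω).Nonempty)
    (ha : 0 < a) (hab : a < b) : 0 < ∫ x, (annulusBump a b x * conicExt Ω φ x) ^ 2 := by
  have hint : Integrable fun x => (annulusBump a b x * conicExt Ω φ x) ^ 2 := by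
    refine (integrable_annulusBump_sq a (ha.trans hab).le).mono'
      (((contDiff_annulusBump a b).continuous.aestronglyMeasurable.mul
        (h.aestronglyMeasurable_conicExt hopen)).pow 2) (ae_of_all _ fun x => ?_)
    rw [Real.norm_of_nonneg (sq_nonneg _)]
    exact pow_le_pow_left₀ (mul_nonneg (annulusBump_nonneg a b x) (h.conicExt_nonneg x))
      (mul_le_of_le_one_right (annulusBump_nonneg a b x) (h.conicExt_le_one x)) 2
  rw [integral_pos_iff_support_of_nonneg (fun x => sq_nonneg _) hint]
  have hannulus_open : IsOpen (cone N Ω ∩ norm ⁻¹' Ioo a b) :=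
    hopen.inter (isOpen_Ioo.preimage continuous_norm)
  obtain ⟨x, hx, hxr⟩ := exists_mem_cone_norm_eq hne (r := (a + b) / 2) (by linarith)
  have hannulus_ne : (cone N Ω ∩ norm ⁻¹' Ioo a b).Nonempty :=
    ⟨x, hx, by rw [hxr]; linarith, by rw [hxr]; linarith⟩
  refine (hannulus_open.measure_pos volume hannulus_ne).trans_le (measure_mono fun y hy => ?_)
  exact pow_ne_zero 2 (mul_pos (annulusBump_pos ha.le hy.2.1 hy.2.2) (h.conicExt_pos hy.1)).ne'

theorem DirichletEigenpair.exists_isBartaMeasure (h : DirichletEigenpair N Ω lam1 φ)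
    (hopen : IsOpen (cone N Ω)) (hne : (cone N Ω).Nonempty) (hρ : 0 ≤ ρ) {Λ : ℝ}
    (hΛ : lam1 < Λ) :
    ∃ (K : Set (Euc N)) (M : ℝ≥0) (ν : Measure (Euc N)),
      IsBartaMeasure (coneGT N ρ Ω) K M Λ ν := by
  obtain ⟨a, ha⟩ := exists_gt ρ
  obtain ⟨b, hab⟩ := exists_gt a
  have ha_pos : 0 < a := hρ.trans_lt ha
  have hmass := h.integral_sq_annulusBump_mul_conicExt_pos hopen hne ha_pos hab
  have hnorm_lim := h.tendsto_integral_truncEigen_sq hopen ha_pos hab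
  have hrayleigh_lim := (h.tendsto_integral_truncEigen_mul hopen ha_pos hab).const_mul lam1
  obtain ⟨n, hnorm, hrayleigh, hn⟩ := ((hnorm_lim.eventually_const_lt hmass).and
    ((hrayleigh_lim.eventually_lt (hnorm_lim.const_mul Λ)
      (mul_lt_mul_of_pos_right hΛ hmass)).and (eventually_ne_atTop 0))).exists
  exact exists_isBartaMeasure_of_rayleigh_le (isOpen_coneGT hopen hρ)
    (h.contDiff_truncEigen hopen ha_pos hab one_ne_zero hn)
    (h.hasCompactSupport_truncEigen ha_pos hab one_ne_zero hn)
    (h.tsupport_truncEigen_subset_coneGT hρ ha hab one_ne_zero hn) hnorm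
    ((h.integral_fderiv_truncEigen_tangGrad hopen ha_pos hab hn).trans_le hrayleigh.le)

end Rayleigh

/-! ### Averages of dilations -/

section Dilation

variable {E : Type*} [NormedAddCommGroup E] [InnerProductSpace ℝ E] {U K : Set E}
  {u F G : E → ℝ} {t : ℝ}

theorem euler_log {x : E} (hu : DifferentiableAt ℝ u x) (hne : u x ≠ 0) :
    euler (fun y => log (u y)) x = euler u x / u x := by
  simp [euler, (hu.hasFDerivAt.log hne).fderiv, div_eq_inv_mul]

theorem euler_euler_log (hU : IsOpen U) (hu : ContDiffOn ℝ 2 u U) (hne : ∀ x ∈ U, u x ≠ 0)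
    {x : E} (hx : x ∈ U) :
    euler (euler fun y => log (u y)) x = euler (euler u) x / u x - (euler u x / u x) ^ 2 := by
  have hdiff : ∀ y ∈ U, DifferentiableAt ℝ u y := fun y hy =>
    (hu.differentiableOn two_ne_zero).differentiableAt (hU.mem_nhds hy)
  have heuler : DifferentiableAt ℝ (euler u) x :=
    ((contDiffOn_euler hU hu (m := 1) (by norm_num)).differentiableOn
      one_ne_zero).differentiableAt (hU.mem_nhds hx)
  have hlog : (euler fun y => log (u y)) =ᶠ[𝓝 x] fun y => euler u y * (u y)⁻¹ := by
    filter_upwards [hU.mem_nhds hx] with y hy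
    rw [euler_log (hdiff y hy) (hne y hy), div_eq_mul_inv]
  have hquot := heuler.hasFDerivAt.mul
    ((hasDerivAt_inv (hne x hx)).comp_hasFDerivAt x (hdiff x hx).hasFDerivAt)
  rw [euler.eq_def (euler _), hlog.fderiv_eq,
    HasFDerivAt.fderiv (f := fun y => euler u y * (u y)⁻¹) hquot]
  simp only [Function.comp_apply, add_apply, smul_apply, smul_eq_mul]
  rw [← euler.eq_def, ← euler.eq_def]
  ring

theorem neg_sphLap_div_eq [FiniteDimensional ℝ E] (hU : IsOpen U) (hu : ContDiffOn ℝ 2 u U)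
    (hne : ∀ x ∈ U, u x ≠ 0) {x : E} (hx : x ∈ U) :
    -sphLap u x / u x = euler (euler fun y => log (u y)) x +
      (Module.finrank ℝ E - 2) * euler (fun y => log (u y)) x +
      euler (fun y => log (u y)) x ^ 2 + ‖x‖ ^ 2 * (-Δ u x / u x) := by
  rw [sphLap_eq hU hu hx, euler_euler_log hU hu hne hx,
    euler_log ((hu.differentiableOn two_ne_zero).differentiableAt (hU.mem_nhds hx)) (hne x hx)]
  ring

variable [MeasurableSpace E] {ν : Measure E}

/-- The average over `ν` of `F` dilated by `e^t`, a function of the logarithmic radius `t`. -/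
def dilAvg (ν : Measure E) (F : E → ℝ) (t : ℝ) : ℝ :=
  ∫ x, F (exp t • x) ∂ν

variable [BorelSpace E]

theorem integrable_comp_smul [IsFiniteMeasure ν] (hK : IsCompact K) (hKν : ∀ᵐ x ∂ν, x ∈ K)
    (hF : ContinuousOn F U) {c : ℝ} (hc : ∀ x ∈ K, c • x ∈ U) :
    Integrable (fun x => F (c • x)) ν := by
  rw [← Measure.restrict_eq_self_of_ae_mem hKν]
  exact (hF.comp (continuous_const_smul c).continuousOn hc).integrableOn_compact hK

theorem hasDerivAt_dilAvg [IsFiniteMeasure ν] (hU : IsOpen U) (hK : IsCompact K)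
    (hKν : ∀ᵐ x ∂ν, x ∈ K) (hdil : ∀ c : ℝ, 1 ≤ c → ∀ x ∈ K, c • x ∈ U)
    (hF : ContDiffOn ℝ 1 F U) (ht : 0 < t) :
    HasDerivAt (dilAvg ν F) (dilAvg ν (euler F) t) t := by
  have hmem : ∀ s : ℝ, 0 ≤ s → ∀ x ∈ K, exp s • x ∈ U := fun s hs => hdil _ (one_le_exp hs)
  have heuler : ContinuousOn (euler F) U :=
    (contDiffOn_euler hU hF (m := 0) (by norm_num)).continuousOn
  have hjoint : ContinuousOn (fun z : ℝ × E => euler F (exp z.1 • z.2)) (Icc 0 (t + 1) ×ˢ K) :=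
    heuler.comp (f := fun z : ℝ × E => exp z.1 • z.2) (by fun_prop)
      fun z hz => hmem z.1 hz.1.1 z.2 hz.2
  obtain ⟨b, hb⟩ := (isCompact_Icc.prod hK).exists_bound_of_continuousOn hjoint
  have hnhds : Icc 0 (t + 1) ∈ 𝓝 t := Icc_mem_nhds ht (lt_add_one t)
  refine (hasDerivAt_integral_of_dominated_loc_of_deriv_le (F := fun s x => F (exp s • x))
    (F' := fun s x => euler F (exp s • x)) (bound := fun _ => b) hnhds ?_
    (integrable_comp_smul hK hKν hF.continuousOn (hmem t ht.le))
    (integrable_comp_smul hK hKν heuler (hmem t ht.le)).aestronglyMeasurable ?_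
    (integrable_const b) ?_).2
  · filter_upwards [hnhds] with s hs using
      (integrable_comp_smul hK hKν hF.continuousOn (hmem s hs.1)).aestronglyMeasurable
  · filter_upwards [hKν] with x hx s hs using hb (s, x) ⟨hs, hx⟩
  · filter_upwards [hKν] with x hx s hs using hasDerivAt_comp_exp_smul
      ((hF.differentiableOn one_ne_zero).differentiableAt (hU.mem_nhds (hmem s hs.1 x hx)))

theorem dilAvg_add [IsFiniteMeasure ν] (hK : IsCompact K) (hKν : ∀ᵐ x ∂ν, x ∈ K)
    (hF : ContinuousOn F U) (hG : ContinuousOn G U) (hmem : ∀ x ∈ K, exp t • x ∈ U) :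
    dilAvg ν (fun x => F x + G x) t = dilAvg ν F t + dilAvg ν G t :=
  integral_add (integrable_comp_smul hK hKν hF hmem) (integrable_comp_smul hK hKν hG hmem)

theorem dilAvg_mono [IsFiniteMeasure ν] (hK : IsCompact K) (hKν : ∀ᵐ x ∂ν, x ∈ K)
    (hF : ContinuousOn F U) (hG : ContinuousOn G U) (hmem : ∀ x ∈ K, exp t • x ∈ U)
    (hle : ∀ x ∈ K, F (exp t • x) ≤ G (exp t • x)) : dilAvg ν F t ≤ dilAvg ν G t :=
  integral_mono_ae (integrable_comp_smul hK hKν hF hmem) (integrable_comp_smul hK hKν hG hmem)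
    (hKν.mono hle)

variable [IsProbabilityMeasure ν]

theorem sq_dilAvg_le (hK : IsCompact K) (hKν : ∀ᵐ x ∂ν, x ∈ K) (hF : ContinuousOn F U)
    (hmem : ∀ x ∈ K, exp t • x ∈ U) : dilAvg ν F t ^ 2 ≤ dilAvg ν (fun x => F x ^ 2) t :=
  (even_two.convexOn_pow (𝕜 := ℝ)).map_integral_le (continuous_pow 2).continuousOn isClosed_univ
    (ae_of_all _ fun _ => mem_univ _) (integrable_comp_smul hK hKν hF hmem)
    (integrable_comp_smul hK hKν (hF.pow 2) hmem)

theorem exp_mul_dilAvg_log_le (hK : IsCompact K) (hKν : ∀ᵐ x ∂ν, x ∈ K) (hu : ContinuousOn u U)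
    (hpos : ∀ x ∈ U, 0 < u x) (hmem : ∀ x ∈ K, exp t • x ∈ U) (s : ℝ) :
    exp (s * dilAvg ν (fun x => log (u x)) t) ≤ dilAvg ν (fun x => u x ^ s) t := by
  have hlog : ContinuousOn (fun x => s * log (u x)) U :=
    (hu.log fun x hx => (hpos x hx).ne').const_smul s
  have hrpow : dilAvg ν (fun x => u x ^ s) t = ∫ x, exp (s * log (u (exp t • x))) ∂ν := by
    refine integral_congr_ae ?_
    filter_upwards [hKν] with x hx
    rw [rpow_def_of_pos (hpos _ (hmem x hx)), mul_comm]
  rw [hrpow, dilAvg, ← integral_const_mul]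
  exact convexOn_exp.map_integral_le continuous_exp.continuousOn isClosed_univ
    (ae_of_all _ fun _ => mem_univ _) (integrable_comp_smul hK hKν hlog hmem)
    (integrable_comp_smul hK hKν hlog.rexp hmem)

end Dilation

/-! ### The averaged inequality -/

section Convolution

theorem setLIntegral_comp_smul {E : Type*} [NormedAddCommGroup E] [NormedSpace ℝ E]
    [FiniteDimensional ℝ E] [MeasurableSpace E] [BorelSpace E] (μ : Measure E)
    [μ.IsAddHaarMeasure] {c : ℝ} (hc : 0 < c) (g : E → ℝ≥0∞) (U : Set E) :
    ENNReal.ofReal (c ^ Module.finrank ℝ E) * ∫⁻ x in (c • ·) ⁻¹' U, g (c • x) ∂μ =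
      ∫⁻ y in U, g y ∂μ := by
  have hemb : MeasurableEmbedding (c • · : E → E) :=
    (Homeomorph.smulOfNeZero c hc.ne').measurableEmbedding
  have hcn : 0 < c ^ Module.finrank ℝ E := by positivity
  rw [(hemb.measurable.measurePreserving μ).setLIntegral_comp_preimage_emb hemb,
    Measure.map_addHaar_smul μ hc.ne', Measure.restrict_smul, lintegral_smul_measure, smul_eq_mul,
    ← mul_assoc, ← ENNReal.ofReal_mul hcn.le, abs_of_pos (inv_pos.2 hcn), mul_inv_cancel₀ hcn.ne',
    ENNReal.ofReal_one, one_mul]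

variable {N : ℕ} {Ω K : Set (Euc N)} {M : ℝ≥0} {Λ α p ρ t : ℝ} {ν : Measure (Euc N)}
  {u v : Euc N → ℝ}

theorem IsBartaMeasure.lintegral_comp_smul_le {U : Set (Euc N)} (hB : IsBartaMeasure U K M Λ ν)
    {c : ℝ} (hc : 0 < c) (hmem : ∀ x ∈ K, c • x ∈ U) (g : Euc N → ℝ≥0∞) :
    ENNReal.ofReal (c ^ N) * ∫⁻ x, g (c • x) ∂ν ≤ M * ∫⁻ y in U, g y := by
  calc ENNReal.ofReal (c ^ N) * ∫⁻ x, g (c • x) ∂ν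
      = ENNReal.ofReal (c ^ N) * ∫⁻ x in K, g (c • x) ∂ν := by
        rw [Measure.restrict_eq_self_of_ae_mem hB.ae_mem]
    _ ≤ ENNReal.ofReal (c ^ N) * ∫⁻ x in (c • ·) ⁻¹' U, g (c • x) ∂(M • volume) := by
        gcongr
        exacts [hmem, hB.le_smul]
    _ = M * ∫⁻ y in U, g y := by
        rw [Measure.restrict_smul, lintegral_smul_measure, ← setLIntegral_comp_smul volume hc g U,
          finrank_euclideanSpace_fin, ENNReal.smul_def, smul_eq_mul, mul_left_comm]

theorem IsBartaMeasure.rpow_mul_dilAvg_le_rieszConv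
    (hB : IsBartaMeasure (coneGT N ρ Ω) K M Λ ν) (hα : 0 ≤ α)
    (hv : ContinuousOn v (coneGT N ρ Ω)) (hv_nonneg : ∀ x ∈ coneGT N ρ Ω, 0 ≤ v x) (ht : 0 ≤ t)
    {z : Euc N} (hz : z ≠ 0) {R : ℝ} (hR : ∀ x ∈ K, ‖z - exp t • x‖ ≤ R) (hR_nonneg : 0 ≤ R)
    (hfin : rieszConv N α ρ Ω v z < ⊤) :
    R ^ (-α) * exp t ^ N * dilAvg ν v t ≤ M * (rieszConv N α ρ Ω v z).toReal := by
  have : IsProbabilityMeasure ν := hB.isProbabilityMeasure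
  have : Nontrivial (Euc N) := nontrivial_of_ne z 0 hz
  have hmem : ∀ x ∈ K, exp t • x ∈ coneGT N ρ Ω := fun x hx =>
    smul_mem_coneGT (one_le_exp ht) (hB.subset hx)
  -- At `exp t • x = z` the integrand of `rieszConv` is `0 ^ (-α)`, which is `0` unless `α = 0`.
  have hne : ∀ᵐ x ∂ν, exp t • x ≠ z := by
    refine (Measure.absolutelyContinuous_of_le_smul hB.le_smul).ae_le ?_
    refine (Measure.ae_ne volume (exp (-t) • z)).mono fun x hx hxz => hx ?_
    rw [← hxz, smul_smul, ← exp_add, neg_add_cancel, exp_zero, one_smul]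
  have hlower : ENNReal.ofReal (R ^ (-α) * dilAvg ν v t) ≤
      ∫⁻ x, ENNReal.ofReal (v (exp t • x) * ‖z - exp t • x‖ ^ (-α)) ∂ν := by
    rw [dilAvg, ← integral_const_mul, ofReal_integral_eq_lintegral_ofReal
      ((integrable_comp_smul hB.isCompact hB.ae_mem hv hmem).const_mul _)]
    · refine lintegral_mono_ae ?_
      filter_upwards [hB.ae_mem, hne] with x hx hxz
      rw [mul_comm]
      gcongr ENNReal.ofReal (_ * ?_)
      · exact hv_nonneg _ (hmem x hx)
      · exact rpow_le_rpow_of_nonpos (norm_pos_iff.2 (sub_ne_zero.2 hxz.symm)) (hR x hx)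
          (neg_nonpos.2 hα)
    · filter_upwards [hB.ae_mem] with x hx
        using mul_nonneg (rpow_nonneg hR_nonneg _) (hv_nonneg _ (hmem x hx))
  have hconv := (mul_le_mul_right hlower (ENNReal.ofReal (exp t ^ N))).trans
    (hB.lintegral_comp_smul_le (exp_pos t) hmem fun y => ENNReal.ofReal (v y * ‖z - y‖ ^ (-α)))
  rw [← ENNReal.ofReal_mul (by positivity)] at hconv
  calc R ^ (-α) * exp t ^ N * dilAvg ν v t = exp t ^ N * (R ^ (-α) * dilAvg ν v t) := by ring
    _ ≤ (M * rieszConv N α ρ Ω v z).toReal :=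
        (ENNReal.ofReal_le_iff_le_toReal (ENNReal.mul_ne_top ENNReal.coe_ne_top hfin.ne)).1 hconv
    _ = M * (rieszConv N α ρ Ω v z).toReal := by
        rw [ENNReal.toReal_mul, ENNReal.coe_toReal]

end Convolution

section AveragedInequality

variable {N : ℕ} {Ω K : Set (Euc N)} {M : ℝ≥0} {Λ α p q ρ μ : ℝ} {ν : Measure (Euc N)}
  {u : Euc N → ℝ}

/-- A positive solution of `(E)` in the open truncated cone, without the continuity up to the
boundary that `IsPosSolE` includes. -/
structure IsInteriorPosSol (N : ℕ) (ρ μ α p q : ℝ) (Ω : Set (Euc N)) (u : Euc N → ℝ) : Prop where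
  contDiffOn : ContDiffOn ℝ 2 u (coneGT N ρ Ω)
  pos : ∀ x ∈ coneGT N ρ Ω, 0 < u x
  rieszConv_lt_top : ∀ x ∈ coneGT N ρ Ω, rieszConv N α ρ Ω (fun y => u y ^ p) x < ⊤
  le : ∀ x ∈ coneGT N ρ Ω, (rieszConv N α ρ Ω (fun y => u y ^ p) x).toReal * u x ^ q ≤
    -lap N u x - μ * ‖x‖ ^ (-(2 : ℝ)) * u x

theorem IsPosSolE.isInteriorPosSol (hu : IsPosSolE N ρ μ α p q Ω u) :
    IsInteriorPosSol N ρ μ α p q Ω u :=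
  ⟨hu.1, hu.2.2.1, hu.2.2.2.1, hu.2.2.2.2⟩

theorem IsInteriorPosSol.euler_euler_log_add_le (hu : IsInteriorPosSol N ρ μ α p q Ω u)
    (hopen : IsOpen (cone N Ω)) (hρ : 0 ≤ ρ) {x : Euc N} (hx : x ∈ coneGT N ρ Ω) :
    euler (euler fun y => log (u y)) x + (N - 2) * euler (fun y => log (u y)) x +
      euler (fun y => log (u y)) x ^ 2 + μ +
        ‖x‖ ^ 2 * (rieszConv N α ρ Ω (fun y => u y ^ p) x).toReal * u x ^ (q - 1) ≤
      -sphLap u x / u x := by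
  have hux : 0 < u x := hu.pos x hx
  have hnorm : 0 < ‖x‖ := hρ.trans_lt hx.1
  have hle := hu.le x hx
  rw [neg_sphLap_div_eq (isOpen_coneGT hopen hρ) hu.contDiffOn (fun y hy => (hu.pos y hy).ne') hx,
    finrank_euclideanSpace_fin, add_assoc _ μ]
  gcongr
  rw [lap_eq_laplacian, rpow_neg hnorm.le, rpow_two] at hle
  calc μ + ‖x‖ ^ 2 * (rieszConv N α ρ Ω (fun y => u y ^ p) x).toReal * u x ^ (q - 1)
      = ‖x‖ ^ 2 * (((rieszConv N α ρ Ω (fun y => u y ^ p) x).toReal * u x ^ q +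
          μ * (‖x‖ ^ 2)⁻¹ * u x) / u x) := by
        rw [rpow_sub_one hux.ne']
        field_simp
        ring
    _ ≤ ‖x‖ ^ 2 * (-Δ u x / u x) := by
        gcongr
        linarith

theorem IsBartaMeasure.dilAvg_neg_sphLap_div_le (hB : IsBartaMeasure (coneGT N ρ Ω) K M Λ ν)
    (hu : ContDiffOn ℝ 2 u (coneGT N ρ Ω)) (hpos : ∀ x ∈ coneGT N ρ Ω, 0 < u x) {t : ℝ}
    (ht : 0 ≤ t) : dilAvg ν (fun x => -sphLap u x / u x) t ≤ Λ := by
  have hmaps : MapsTo (exp t • ·) (coneGT N ρ Ω) (coneGT N ρ Ω) := fun x hx =>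
    smul_mem_coneGT (one_le_exp ht) hx
  simpa only [dilAvg, sphLap_comp_smul (exp_ne_zero t)] using
    hB.integral_le (fun x => u (exp t • x)) (hu.comp (contDiff_const_smul _).contDiffOn hmaps)
      fun x hx => hpos _ (hmaps hx)

theorem IsBartaMeasure.hasDerivAt_dilAvg (hB : IsBartaMeasure (coneGT N ρ Ω) K M Λ ν)
    (hopen : IsOpen (cone N Ω)) (hρ : 0 ≤ ρ) {F : Euc N → ℝ}
    (hF : ContDiffOn ℝ 1 F (coneGT N ρ Ω)) {t : ℝ} (ht : 0 < t) :
    HasDerivAt (dilAvg ν F) (dilAvg ν (euler F) t) t :=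
  have := hB.isProbabilityMeasure
  _root_.hasDerivAt_dilAvg (isOpen_coneGT hopen hρ) hB.isCompact hB.ae_mem
    (fun _ hc _ hx => smul_mem_coneGT hc (hB.subset hx)) hF ht

theorem IsBartaMeasure.coe_pos {U : Set (Euc N)} (hB : IsBartaMeasure U K M Λ ν) :
    0 < (M : ℝ) := by
  have : IsProbabilityMeasure ν := hB.isProbabilityMeasure
  refine NNReal.coe_pos.2 (pos_iff_ne_zero.2 fun hM => ?_)
  have hν : ν = 0 := Measure.nonpos_iff_eq_zero'.1 (by simpa [hM] using hB.le_smul)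
  exact IsProbabilityMeasure.ne_zero ν hν

theorem IsBartaMeasure.exists_mul_exp_le_rieszConv (hB : IsBartaMeasure (coneGT N ρ Ω) K M Λ ν)
    (hu : IsInteriorPosSol N ρ μ α p q Ω u) (hα : 0 ≤ α) (hρ : 0 ≤ ρ) {a : ℝ} (ha : 0 ≤ a) :
    ∃ C > 0, ∀ t, 0 ≤ t → ∀ z ∈ coneGT N ρ Ω, ‖z‖ ≤ a * exp t →
      C * exp ((N - α) * t + p * dilAvg ν (fun x => log (u x)) t) ≤
        (rieszConv N α ρ Ω (fun y => u y ^ p) z).toReal := by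
  have := hB.isProbabilityMeasure
  obtain ⟨r, hr, hKr⟩ := hB.isCompact.isBounded.exists_pos_norm_le
  have hM := hB.coe_pos
  refine ⟨(a + r) ^ (-α) / M, by positivity, fun t ht z hz hza => ?_⟩
  have hz_norm : 0 < ‖z‖ := hρ.trans_lt hz.1
  have hdist : ∀ x ∈ K, ‖z - exp t • x‖ ≤ (a + r) * exp t := fun x hx => by
    calc ‖z - exp t • x‖ ≤ ‖z‖ + exp t * ‖x‖ := by
          simpa [norm_smul] using norm_sub_le z (exp t • x)
      _ ≤ a * exp t + exp t * r := by gcongr; exact hKr x hx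
      _ = (a + r) * exp t := by ring
  have hmem : ∀ x ∈ K, exp t • x ∈ coneGT N ρ Ω := fun x hx =>
    smul_mem_coneGT (one_le_exp ht) (hB.subset hx)
  have hu_cont := hu.contDiffOn.continuousOn
  have hconv := hB.rpow_mul_dilAvg_le_rieszConv hα
    (hu_cont.rpow_const fun x hx => Or.inl (hu.pos x hx).ne')
    (fun x hx => (rpow_pos_of_pos (hu.pos x hx) p).le) ht (norm_pos_iff.1 hz_norm) hdist
    (by positivity) (hu.rieszConv_lt_top z hz)
  have hjensen := exp_mul_dilAvg_log_le hB.isCompact hB.ae_mem hu_cont hu.pos hmem p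
  calc (a + r) ^ (-α) / M * exp ((N - α) * t + p * dilAvg ν (fun x => log (u x)) t)
      = ((a + r) * exp t) ^ (-α) * exp t ^ N * exp (p * dilAvg ν (fun x => log (u x)) t) / M := by
        rw [mul_rpow (by positivity) (exp_pos t).le, ← exp_mul, ← exp_nat_mul, sub_mul, exp_add,
          sub_eq_add_neg, exp_add, mul_neg, mul_comm t α]
        ring
    _ ≤ ((a + r) * exp t) ^ (-α) * exp t ^ N * dilAvg ν (fun x => u x ^ p) t / M := by gcongr
    _ ≤ (rieszConv N α ρ Ω (fun y => u y ^ p) z).toReal := by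
        rwa [div_le_iff₀' hM]

theorem IsBartaMeasure.exists_dilAvg_log_le (hB : IsBartaMeasure (coneGT N ρ Ω) K M Λ ν)
    (hu : IsInteriorPosSol N ρ μ α p q Ω u) (hα : 0 ≤ α) (hαN : α ≤ N) (hp : 0 < p) (hρ : 0 ≤ ρ)
    (hne : (coneGT N ρ Ω).Nonempty) :
    ∃ Y, ∀ t, 0 ≤ t → dilAvg ν (fun x => log (u x)) t ≤ Y := by
  obtain ⟨z, hz⟩ := hne
  obtain ⟨C, hC, hconv⟩ := hB.exists_mul_exp_le_rieszConv hu hα hρ (norm_nonneg z)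
  set I := (rieszConv N α ρ Ω (fun y => u y ^ p) z).toReal
  refine ⟨I / C / p, fun t ht => ?_⟩
  have hexp : exp ((N - α) * t + p * dilAvg ν (fun x => log (u x)) t) ≤ I / C :=
    (le_div_iff₀' hC).2
      (hconv t ht z hz (le_mul_of_one_le_right (norm_nonneg z) (one_le_exp ht)))
  have hgrowth : 0 ≤ (N - α) * t := mul_nonneg (sub_nonneg.2 hαN) ht
  rw [le_div_iff₀' hp]
  linarith [add_one_le_exp ((N - α) * t + p * dilAvg ν (fun x => log (u x)) t)]

theorem IsBartaMeasure.dilAvg_riccati_le (hB : IsBartaMeasure (coneGT N ρ Ω) K M Λ ν)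
    (hu : IsInteriorPosSol N ρ μ α p q Ω u) (hopen : IsOpen (cone N Ω)) (hρ : 0 ≤ ρ) {c t : ℝ}
    (ht : 0 ≤ t) (hc : 0 ≤ c)
    (hcK : ∀ x ∈ K, c ≤ ‖exp t • x‖ ^ 2 *
      (rieszConv N α ρ Ω (fun y => u y ^ p) (exp t • x)).toReal) :
    dilAvg ν (euler (euler fun y => log (u y))) t +
      (N - 2) * dilAvg ν (euler fun y => log (u y)) t +
      dilAvg ν (euler fun y => log (u y)) t ^ 2 + μ +
        c * exp ((q - 1) * dilAvg ν (fun y => log (u y)) t) ≤ Λ := by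
  have := hB.isProbabilityMeasure
  have hU := isOpen_coneGT hopen hρ (Ω := Ω)
  have hmem : ∀ x ∈ K, exp t • x ∈ coneGT N ρ Ω := fun x hx =>
    smul_mem_coneGT (one_le_exp ht) (hB.subset hx)
  have hu_cont := hu.contDiffOn.continuousOn
  have hu_ne : ∀ x ∈ coneGT N ρ Ω, u x ≠ 0 := fun x hx => (hu.pos x hx).ne'
  set l : Euc N → ℝ := fun y => log (u y)
  have hEl := contDiffOn_euler hU (hu.contDiffOn.log hu_ne) (m := 1) (by norm_num)
  have hEl_cont : ContinuousOn (euler l) (coneGT N ρ Ω) := hEl.continuousOn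
  have hEEl_cont : ContinuousOn (euler (euler l)) (coneGT N ρ Ω) :=
    (contDiffOn_euler hU hEl (m := 0) (by norm_num)).continuousOn
  have hrpow : ContinuousOn (fun x => u x ^ (q - 1)) (coneGT N ρ Ω) :=
    hu_cont.rpow_const fun x hx => Or.inl (hu_ne x hx)
  have hadd {F G : Euc N → ℝ} (hF : ContinuousOn F (coneGT N ρ Ω))
      (hG : ContinuousOn G (coneGT N ρ Ω)) :=
    dilAvg_add hB.isCompact hB.ae_mem hF hG hmem
  calc dilAvg ν (euler (euler l)) t + (N - 2) * dilAvg ν (euler l) t +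
        dilAvg ν (euler l) t ^ 2 + μ + c * exp ((q - 1) * dilAvg ν l t)
      ≤ dilAvg ν (euler (euler l)) t + (N - 2) * dilAvg ν (euler l) t +
        dilAvg ν (fun x => euler l x ^ 2) t + μ + c * dilAvg ν (fun x => u x ^ (q - 1)) t := by
        gcongr
        · exact sq_dilAvg_le hB.isCompact hB.ae_mem hEl_cont hmem
        · exact exp_mul_dilAvg_log_le hB.isCompact hB.ae_mem hu_cont hu.pos hmem _
    _ = dilAvg ν (fun x => euler (euler l) x + (N - 2) * euler l x + euler l x ^ 2 + μ +
          c * u x ^ (q - 1)) t := by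
        rw [hadd (by fun_prop) (by fun_prop), hadd (by fun_prop) (by fun_prop),
          hadd (by fun_prop) (by fun_prop), hadd (by fun_prop) (by fun_prop)]
        simp only [dilAvg, integral_const_mul, integral_const, probReal_univ, one_smul]
    _ ≤ dilAvg ν (fun x => -sphLap u x / u x) t := by
        refine dilAvg_mono hB.isCompact hB.ae_mem (by fun_prop)
          ((continuousOn_sphLap hU hu.contDiffOn).neg.div hu_cont hu_ne) hmem fun x hx => ?_
        refine le_trans ?_ (hu.euler_euler_log_add_le hopen hρ (hmem x hx))
        gcongr
        · exact rpow_nonneg (hu.pos _ (hmem x hx)).le _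
        · exact hcK x hx
    _ ≤ Λ := hB.dilAvg_neg_sphLap_div_le hu.contDiffOn hu.pos ht

theorem IsBartaMeasure.exists_dilAvg_riccati_le (hB : IsBartaMeasure (coneGT N ρ Ω) K M Λ ν)
    (hu : IsInteriorPosSol N ρ μ α p q Ω u) (hopen : IsOpen (cone N Ω)) (hα : 0 ≤ α)
    (hρ : 0 ≤ ρ) :
    ∃ C > 0, ∀ t, 0 ≤ t → dilAvg ν (euler (euler fun y => log (u y))) t +
      (N - 2) * dilAvg ν (euler fun y => log (u y)) t +
      dilAvg ν (euler fun y => log (u y)) t ^ 2 + μ +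
        C * exp ((N - α + 2) * t + (p + q - 1) * dilAvg ν (fun y => log (u y)) t) ≤ Λ := by
  obtain ⟨r, hr, hKr⟩ := hB.isCompact.isBounded.exists_pos_norm_le
  obtain ⟨s, hs, hKs⟩ := hB.isCompact.exists_forall_le' continuous_norm.continuousOn
    fun x hx => hρ.trans_lt (hB.subset hx).1
  obtain ⟨C, hC, hconv⟩ := hB.exists_mul_exp_le_rieszConv hu hα hρ hr.le
  refine ⟨s ^ 2 * C, by positivity, fun t ht => ?_⟩
  set y := dilAvg ν (fun y => log (u y)) t
  have hriccati := hB.dilAvg_riccati_le hu hopen hρ ht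
    (c := (exp t * s) ^ 2 * (C * exp ((N - α) * t + p * y))) (by positivity) fun x hx => by
      have hnorm : ‖exp t • x‖ = exp t * ‖x‖ := by rw [norm_smul, norm_of_nonneg (exp_pos t).le]
      gcongr
      · exact hnorm ▸ mul_le_mul_of_nonneg_left (hKs x hx) (exp_pos t).le
      · refine hconv t ht _ (smul_mem_coneGT (one_le_exp ht) (hB.subset hx)) ?_
        rw [hnorm, mul_comm]
        gcongr
        exact hKr x hx
  convert hriccati using 2
  rw [show (N - α + 2) * t + (p + q - 1) * y = 2 * t + ((N - α) * t + p * y) + (q - 1) * y by ring,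
    exp_add, exp_add, two_mul t, exp_add]
  ring

end AveragedInequality

/-! ### A Riccati inequality on a half-line -/

section RiccatiInequality

variable {v v' v'' y y' y'' : ℝ → ℝ} {c k σ β θ C Y : ℝ}

theorem eventually_antitoneOn_of_deriv_nonpos (hv : ∀ᶠ t in atTop, HasDerivAt v (v' t) t)
    (hle : ∀ᶠ t in atTop, v' t ≤ 0) : ∀ᶠ T in atTop, AntitoneOn v (Ici T) := by
  obtain ⟨T, hT⟩ := eventually_atTop.1 (hv.and hle)
  filter_upwards [eventually_ge_atTop T] with S hS
  exact antitoneOn_of_hasDerivWithinAt_nonpos (convex_Ici S)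
    (fun t ht => (hT t (hS.trans ht)).1.continuousAt.continuousWithinAt)
    (fun t ht => (hT t (hS.trans (interior_subset ht))).1.hasDerivWithinAt)
    (fun t ht => (hT t (hS.trans (interior_subset ht))).2)

theorem tendsto_atTop_of_le_deriv (hc : 0 < c) (hv : ∀ᶠ t in atTop, HasDerivAt v (v' t) t)
    (hle : ∀ᶠ t in atTop, c ≤ v' t) : Tendsto v atTop atTop := by
  have hdiff : ∀ᶠ t in atTop, HasDerivAt (fun t => c * t - v t) (c - v' t) t :=
    hv.mono fun t ht => (hasDerivAt_const_mul c).fun_sub ht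
  obtain ⟨T, hT⟩ := (eventually_antitoneOn_of_deriv_nonpos hdiff
    (hle.mono fun t ht => sub_nonpos.2 ht)).exists
  refine tendsto_atTop_mono' atTop ?_
    (tendsto_atTop_add_const_left _ (v T - c * T) (tendsto_id.const_mul_atTop hc))
  filter_upwards [eventually_ge_atTop T] with t ht
  have hle_T : c * t - v t ≤ c * T - v T := hT self_mem_Ici ht ht
  simp only [id_eq]
  linarith

theorem not_eventually_pos_of_deriv_le (hc : c < 0)
    (hv : ∀ᶠ t in atTop, HasDerivAt v (v' t) t) (hle : ∀ᶠ t in atTop, v' t ≤ c) :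
    ¬ ∀ᶠ t in atTop, 0 < v t := fun hpos => by
  have hneg : Tendsto (fun t => -v t) atTop atTop :=
    tendsto_atTop_of_le_deriv (neg_pos.2 hc) (hv.mono fun t ht => ht.fun_neg)
      (hle.mono fun t ht => neg_le_neg ht)
  obtain ⟨t, hneg_t, hpos_t⟩ := ((hneg.eventually_gt_atTop 0).and hpos).exists
  linarith

theorem not_eventually_pos_of_deriv_deriv_le_neg (hv : ∀ᶠ t in atTop, HasDerivAt v (v' t) t)
    (hv' : ∀ᶠ t in atTop, HasDerivAt v' (v'' t) t) (hle : ∀ᶠ t in atTop, v'' t ≤ -v t) :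
    ¬ ∀ᶠ t in atTop, 0 < v t := fun hpos => by
  have hanti := eventually_antitoneOn_of_deriv_nonpos hv'
    ((hle.and hpos).mono fun t ht => by linarith [ht.1, ht.2])
  have hv'_nonneg : ∀ᶠ t in atTop, 0 ≤ v' t := hanti.mono fun t ht => not_lt.1 fun hlt =>
    not_eventually_pos_of_deriv_le hlt hv
      ((eventually_ge_atTop t).mono fun s hs => ht self_mem_Ici hs hs) hpos
  obtain ⟨T, hmono, hv_T⟩ := ((eventually_antitoneOn_of_deriv_nonpos
    (hv.mono fun t ht => ht.fun_neg) (hv'_nonneg.mono fun t ht => neg_nonpos.2 ht)).and hpos).exists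
  have hv'_lim : Tendsto (fun t => -v' t) atTop atTop :=
    tendsto_atTop_of_le_deriv hv_T (hv'.mono fun t ht => ht.fun_neg) <| by
      filter_upwards [hle, eventually_ge_atTop T] with t ht hTt
      linarith [hmono self_mem_Ici hTt hTt]
  obtain ⟨t, hneg, hnonneg⟩ := ((hv'_lim.eventually_gt_atTop 0).and hv'_nonneg).exists
  linarith

theorem eventually_deriv_add_mul_nonneg (hσ : 0 < σ) (hv : ∀ᶠ t in atTop, HasDerivAt v (v' t) t)
    (hv' : ∀ᶠ t in atTop, HasDerivAt v' (v'' t) t) (hle : ∀ᶠ t in atTop, v'' t ≤ σ ^ 2 * v t)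
    (hpos : ∀ᶠ t in atTop, 0 < v t) : ∀ᶠ t in atTop, 0 ≤ v' t + σ * v t := by
  have hderiv : ∀ᶠ t in atTop, HasDerivAt (fun t => exp (-σ * t) * (v' t + σ * v t))
      (exp (-σ * t) * (v'' t - σ ^ 2 * v t)) t := by
    filter_upwards [hv, hv'] with t ht ht'
    exact ((hasDerivAt_const_mul (-σ)).exp.fun_mul (ht'.fun_add (ht.const_mul σ))).congr_deriv
      (by ring)
  have hanti := eventually_antitoneOn_of_deriv_nonpos hderiv <| hle.mono fun t ht =>
    mul_nonpos_of_nonneg_of_nonpos (exp_pos _).le (sub_nonpos.2 ht)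
  filter_upwards [hanti] with T hT
  by_contra! hneg
  refine not_eventually_pos_of_deriv_le hneg hv ?_ hpos
  filter_upwards [hpos, eventually_ge_atTop T] with t hv_pos hTt
  have hdecay : exp (-σ * t) * (v' t + σ * v t) ≤ exp (-σ * T) * (v' T + σ * v T) :=
    hT self_mem_Ici hTt hTt
  have hexp : exp (-σ * t) ≤ exp (-σ * T) := exp_le_exp.2 (by nlinarith)
  have hle_T : v' t + σ * v t ≤ v' T + σ * v T := by
    refine le_of_mul_le_mul_left (hdecay.trans ?_) (exp_pos (-σ * t))
    exact mul_le_mul_of_nonpos_right hexp hneg.le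
  linarith [mul_pos hσ hv_pos]

theorem hasDerivAt_exp_add_mul {t : ℝ} (hy : HasDerivAt y (y' t) t) :
    HasDerivAt (fun t => exp (y t + k * t)) (exp (y t + k * t) * (y' t + k)) t :=
  (hy.fun_add (hasDerivAt_const_mul k)).exp

theorem hasDerivAt_exp_add_mul_mul {t : ℝ} (hy : HasDerivAt y (y' t) t)
    (hy' : HasDerivAt y' (y'' t) t) :
    HasDerivAt (fun t => exp (y t + k * t) * (y' t + k))
      (exp (y t + k * t) * (y'' t + 2 * k * y' t + y' t ^ 2 + k ^ 2)) t :=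
  ((hasDerivAt_exp_add_mul hy).fun_mul (hy'.add_const k)).congr_deriv (by ring)

theorem eventually_neg_add_le_of_riccati (hσ : 0 < σ)
    (hy : ∀ᶠ t in atTop, HasDerivAt y (y' t) t) (hy' : ∀ᶠ t in atTop, HasDerivAt y' (y'' t) t)
    (hle : ∀ᶠ t in atTop, y'' t + 2 * k * y' t + y' t ^ 2 ≤ σ ^ 2 - k ^ 2) :
    ∀ᶠ t in atTop, -(k + σ) ≤ y' t := by
  have hnonneg := eventually_deriv_add_mul_nonneg (v := fun t => exp (y t + k * t)) hσ
    (hy.mono fun t ht => hasDerivAt_exp_add_mul ht)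
    ((hy.and hy').mono fun t ht => hasDerivAt_exp_add_mul_mul ht.1 ht.2)
    (hle.mono fun t ht => by
      rw [mul_comm (σ ^ 2)]
      gcongr
      linarith)
    (.of_forall fun t => exp_pos _)
  filter_upwards [hnonneg] with t ht
  have hfactor : 0 ≤ exp (y t + k * t) * (y' t + k + σ) := by linarith
  linarith [nonneg_of_mul_nonneg_right hfactor (exp_pos _)]

theorem not_eventually_riccati_le (hy : ∀ᶠ t in atTop, HasDerivAt y (y' t) t)
    (hy' : ∀ᶠ t in atTop, HasDerivAt y' (y'' t) t) :
    ¬ ∀ᶠ t in atTop, y'' t + 2 * k * y' t + y' t ^ 2 ≤ -(k ^ 2 + 1) := fun hle =>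
  not_eventually_pos_of_deriv_deriv_le_neg (v := fun t => exp (y t + k * t))
    (hy.mono fun t ht => hasDerivAt_exp_add_mul ht)
    ((hy.and hy').mono fun t ht => hasDerivAt_exp_add_mul_mul ht.1 ht.2)
    (hle.mono fun t ht => by
      rw [← mul_neg_one]
      gcongr
      linarith)
    (.of_forall fun t => exp_pos _)

theorem not_eventually_riccati_exp_le (hσ : 0 < σ) (hC : 0 < C) (hβ : 0 < β)
    (hsub : θ * (k + σ) < β) (hy : ∀ᶠ t in atTop, HasDerivAt y (y' t) t)
    (hy' : ∀ᶠ t in atTop, HasDerivAt y' (y'' t) t) (hY : ∀ᶠ t in atTop, y t ≤ Y) :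
    ¬ ∀ᶠ t in atTop,
      y'' t + 2 * k * y' t + y' t ^ 2 + C * exp (β * t + θ * y t) ≤ σ ^ 2 - k ^ 2 := fun hle => by
  have hexponent : Tendsto (fun t => β * t + θ * y t) atTop atTop := by
    rcases le_or_gt 0 θ with hθ | hθ
    · have hslope := eventually_neg_add_le_of_riccati hσ hy hy' <| hle.mono fun t ht =>
        (le_add_of_nonneg_right (by positivity)).trans ht
      refine tendsto_atTop_of_le_deriv (sub_pos.2 hsub) (v' := fun t => β + θ * y' t)
        (hy.mono fun t ht => (hasDerivAt_const_mul β).fun_add (ht.const_mul θ))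
        (hslope.mono fun t ht => ?_)
      linarith [mul_le_mul_of_nonneg_left ht hθ]
    · refine tendsto_atTop_mono' atTop (hY.mono fun t ht => ?_)
        (tendsto_atTop_add_const_right _ (θ * Y) (tendsto_id.const_mul_atTop hβ))
      exact add_le_add_right (mul_le_mul_of_nonpos_left ht hθ.le) _
  refine not_eventually_riccati_le (k := k) hy hy' ?_
  filter_upwards [hle, ((tendsto_exp_atTop.comp hexponent).const_mul_atTop hC).eventually_ge_atTop
    (σ ^ 2 + 1)] with t ht hlarge
  simp only [Function.comp_apply] at hlarge
  linarith

end RiccatiInequality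

/-! ### Nonexistence -/

theorem neg_gammaStar (N : ℕ) (lam1 μ : ℝ) :
    -gammaStar N lam1 μ = (N - 2) / 2 + √(CHconst N lam1 - μ) := by
  have hdisc : ((N : ℝ) - 2) ^ 2 + 4 * (lam1 - μ) = 2 ^ 2 * (CHconst N lam1 - μ) := by
    rw [CHconst]
    ring
  rw [gammaStar, hdisc, sqrt_mul (by norm_num), sqrt_sq (by norm_num)]
  ring

theorem no_solution_of_pq_subcritical_general {N : ℕ} {Ω : Set (Euc N)}
    (hopen : IsOpen (cone N Ω)) (hne : (cone N Ω).Nonempty) {lam1 : ℝ} {φ : Euc N → ℝ}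
    (hphi : DirichletEigenpair N Ω lam1 φ) {α p q ρ μ : ℝ} (hα : 0 ≤ α) (hαN : α ≤ N) (hp : 0 < p)
    (hρ : 0 ≤ ρ) (hμ : μ ≤ CHconst N lam1)
    (hcrit : (p + q - 1) * (-(gammaStar N lam1 μ)) < (N : ℝ) - α + 2) :
    ¬ ∃ u : Euc N → ℝ, IsInteriorPosSol N ρ μ α p q Ω u := by
  rintro ⟨u, hu⟩
  rw [neg_gammaStar] at hcrit
  have hcont : ContinuousAt (fun σ => (p + q - 1) * ((N - 2) / 2 + σ)) √(CHconst N lam1 - μ) := by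
    fun_prop
  obtain ⟨σ, hσ, hsub⟩ := (hcont.tendsto.eventually_lt_const hcrit).exists_gt
  have hσ_pos : 0 < σ := (sqrt_nonneg _).trans_lt hσ
  have hΛ : lam1 < σ ^ 2 + μ - ((N - 2) / 2) ^ 2 := by
    have hsq := pow_lt_pow_left₀ hσ (sqrt_nonneg _) two_ne_zero
    rw [sq_sqrt (sub_nonneg.2 hμ), CHconst] at hsq
    linarith
  obtain ⟨K, M, ν, hB⟩ := hphi.exists_isBartaMeasure hopen hne hρ hΛ
  have hlog : ContDiffOn ℝ 2 (fun x => log (u x)) (coneGT N ρ Ω) :=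
    hu.contDiffOn.log fun x hx => (hu.pos x hx).ne'
  have hElog := contDiffOn_euler (isOpen_coneGT hopen hρ) hlog (m := 1) (by norm_num)
  obtain ⟨C, hC, hriccati⟩ := hB.exists_dilAvg_riccati_le hu hopen hα hρ
  obtain ⟨Y, hY⟩ := hB.exists_dilAvg_log_le hu hα hαN hp hρ (coneGT_nonempty hne hρ)
  refine not_eventually_riccati_exp_le hσ_pos hC (by linarith) hsub
    ((eventually_gt_atTop 0).mono fun t => hB.hasDerivAt_dilAvg hopen hρ (hlog.of_le one_le_two))
    ((eventually_gt_atTop 0).mono fun t => hB.hasDerivAt_dilAvg hopen hρ hElog)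
    ((eventually_ge_atTop 0).mono hY) ((eventually_ge_atTop 0).mono fun t ht => ?_)
  linarith [hriccati t ht]

/-- if `μ ≤ C_{H,Ω}` and `(p+q-1)·|γ_*| < N - α + 2` then `(E)` has no
positive solution. -/
theorem no_solution_of_pq_subcritical
    (N : ℕ) (hN : 2 ≤ N) (Ω : Set (Euc N)) (hΩ : IsConeDomain N Ω)
    (lam1 : ℝ) (φ : Euc N → ℝ) (hphi : DirichletEigenpair N Ω lam1 φ)
    (α p q ρ μ : ℝ) (hα : 0 ≤ α) (hαN : α < N) (hp : 0 < p) (hq : 0 < q) (hρ : 0 < ρ)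
    (hμ : μ ≤ CHconst N lam1)
    (hcrit : (p + q - 1) * (-(gammaStar N lam1 μ)) < (N : ℝ) - α + 2) :
    ¬ ∃ u : Euc N → ℝ, IsPosSolE N ρ μ α p q Ω u := by
  exact fun ⟨u, hu⟩ => no_solution_of_pq_subcritical_general hΩ.isOpen_cone hΩ.cone_nonempty hphi
    hα hαN.le hp hρ.le hμ hcrit ⟨u, hu.isInteriorPosSol⟩
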